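/- Let R be a local Cohen–Macaulay ring with infinite residue field and let I be a perfect R-ideal of height 2. Assume that I is generically a complete intersection and that I = (Δ, α) : I for some Δ ∈ I^{(2)} and some α ∈ I. Then for every j ≥ 1, core(I^{(2j)}) = I^{(4j−1)}; moreover, if R is Gorenstein then γ(I^{(2j)}) = 4j − 1. -/

import Mathlib

open IsLocalRing

universe u v

namespace CPU

section Defs

variable {R : Type u} [CommRing R]

/-- The minimal number of generators of a submodule, as an extended natural number. -/
noncomputable def muE {M : Type v} [AddCommGroup M] [Module R M] (N : Submodule R M) : ℕ∞ :=
  sInf {n : ℕ∞ | ∃ s : Finset M, (s.card : ℕ∞) = n ∧ Submodule.span R (s : Set M) = N}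

/-- The Krull dimension of a ring, valued in `WithBot ℕ∞`. -/
noncomputable def rDim (S : Type v) [CommRing S] : WithBot ℕ∞ :=
  ringKrullDim S

/-- `J` is a reduction of `I`. -/
def IsReduction (J I : Ideal R) : Prop :=
  J ≤ I ∧ ∃ r : ℕ, I ^ (r + 1) = J * I ^ r

/-- `J` is a minimal reduction of `I`. -/
def IsMinimalReduction (J I : Ideal R) : Prop :=
  IsReduction J I ∧ ∀ J' : Ideal R, IsReduction J' I → J' ≤ J → J' = J

/-- The core of an ideal: the intersection of all of its minimal reductions. -/
noncomputable def core (I : Ideal R) : Ideal R :=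
  sInf {J : Ideal R | IsMinimalReduction J I}

/-- The reduction number of `I`. -/
noncomputable def reductionNumber (I : Ideal R) : ℕ∞ :=
  sInf {n : ℕ∞ | ∃ r : ℕ, (r : ℕ∞) = n ∧ ∃ J : Ideal R,
    IsMinimalReduction J I ∧ I ^ (r + 1) = J * I ^ r}

/-- `γ(I)`: the least number of minimal reductions whose intersection is the core. -/
noncomputable def gamma (I : Ideal R) : ℕ∞ :=
  sInf {n : ℕ∞ | ∃ t : ℕ, (t : ℕ∞) = n ∧ ∃ Js : Fin t → Ideal R,
    (∀ i, IsMinimalReduction (Js i) I) ∧ core I = ⨅ i, Js i}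

/-- The height of an ideal. -/
noncomputable def ht (I : Ideal R) : WithBot ℕ∞ :=
  ⨅ (p : PrimeSpectrum R) (_ : I ≤ p.asIdeal),
    rDim (Localization.AtPrime p.asIdeal)

/-- The Krull dimension of the special fiber ring of `I`,
i.e. the analytic spread of `I`. -/
noncomputable def fiberDim [IsLocalRing R] (I : Ideal R) : WithBot ℕ∞ :=
  rDim (↥(reesAlgebra I) ⧸
    (Ideal.map (algebraMap R ↥(reesAlgebra I)) (maximalIdeal R)))

/-- The condition `G_s`. -/
def Gcond (I : Ideal R) (s : ℕ) : Prop :=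
  ∀ p : PrimeSpectrum R, I ≤ p.asIdeal →
    rDim (Localization.AtPrime p.asIdeal) < (s : WithBot ℕ∞) →
    (muE (Ideal.map (algebraMap R (Localization.AtPrime p.asIdeal)) I) : WithBot ℕ∞) ≤
      rDim (Localization.AtPrime p.asIdeal)

/-- Depth of a module over a local ring, via lengths of regular sequences in the
maximal ideal. -/
noncomputable def mDepth (R : Type u) [CommRing R] [IsLocalRing R]
    (M : Type v) [AddCommGroup M] [Module R M] : ℕ∞ :=
  sSup {n : ℕ∞ | ∃ rs : List R, (∀ x ∈ rs, x ∈ maximalIdeal R) ∧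
    RingTheory.Sequence.IsRegular M rs ∧ (rs.length : ℕ∞) = n}

/-- Depth of the quotient `R/K` of a local ring `R`. -/
noncomputable def qDepth (R : Type u) [CommRing R] [IsLocalRing R] (K : Ideal R) : ℕ∞ :=
  mDepth R (R ⧸ K)

/-- The socle of `R/K`, for `R` local. -/
noncomputable def socle (R : Type u) [CommRing R] [IsLocalRing R] (K : Ideal R) :
    Ideal (R ⧸ K) :=
  Submodule.colon (⊥ : Ideal (R ⧸ K)) (Ideal.map (Ideal.Quotient.mk K) (maximalIdeal R))

/-- The Cohen–Macaulay type of the quotient `R/K` of a local ring `R`. -/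
noncomputable def qType (R : Type u) [CommRing R] [IsLocalRing R] (K : Ideal R) : ℕ∞ :=
  sInf {n : ℕ∞ | ∃ rs : List R, (∀ x ∈ rs, x ∈ maximalIdeal R) ∧
    RingTheory.Sequence.IsRegular (R ⧸ K) rs ∧ (rs.length : ℕ∞) = qDepth R K ∧
    muE (socle R (K ⊔ Ideal.ofList rs)) = n}

/-- Cohen–Macaulayness for a quotient `R/K` of a local ring `R`. -/
def IsCMQuot (R : Type u) [CommRing R] [IsLocalRing R] (K : Ideal R) : Prop :=
  rDim (R ⧸ K) = (qDepth R K : WithBot ℕ∞)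

/-- A Cohen–Macaulay local ring: depth equals Krull dimension. -/
def IsCMLocalRing (R : Type u) [CommRing R] [IsLocalRing R] : Prop :=
  rDim R = (qDepth R (⊥ : Ideal R) : WithBot ℕ∞)

/-- A Gorenstein local ring: Cohen–Macaulay of type one. -/
def IsGorensteinLocalRing (R : Type u) [CommRing R] [IsLocalRing R] : Prop :=
  IsCMLocalRing R ∧ qType R (⊥ : Ideal R) = 1

/-- Gorensteinness of the quotient ring `R/K` of a local ring. -/
def IsGorQuot (R : Type u) [CommRing R] [IsLocalRing R] (K : Ideal R) : Prop :=
  IsCMQuot R K ∧ qType R K = 1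

/-- A regular local ring: the maximal ideal is generated by `dim R` elements. -/
def IsRegularLocal (R : Type u) [CommRing R] [IsLocalRing R] : Prop :=
  IsNoetherianRing R ∧ (muE (maximalIdeal R) : WithBot ℕ∞) = rDim R

/-- Serre's condition `S₂` for the quotient ring `R/K`. -/
def QuotS2 (K : Ideal R) : Prop :=
  ∀ (q : Ideal R) (hq : q.IsPrime), K ≤ q →
    letI := hq
    min 2 (rDim ((Localization.AtPrime q) ⧸
        (Ideal.map (algebraMap R (Localization.AtPrime q)) K)))
      ≤ (qDepth (Localization.AtPrime q)
          (Ideal.map (algebraMap R (Localization.AtPrime q)) K) : WithBot ℕ∞)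

/-- `K` is an `s`-residual intersection of `I`. -/
def IsResidualIntersection (I K : Ideal R) (s : ℕ) : Prop :=
  K ≠ ⊤ ∧ ht I ≤ (s : WithBot ℕ∞) ∧ (s : WithBot ℕ∞) ≤ ht K ∧
    ∃ a : Ideal R, a ≤ I ∧ (∃ f : Finset R, f.card ≤ s ∧ Ideal.span (f : Set R) = a) ∧
      K = Submodule.colon a I

/-- `K` is a geometric `s`-residual intersection of `I`. -/
def IsGeometricRI (I K : Ideal R) (s : ℕ) : Prop :=
  IsResidualIntersection I K s ∧ (s : WithBot ℕ∞) + 1 ≤ ht (I ⊔ K)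

/-- `I` is weakly `s`-residually `S₂`. -/
def WeaklyResS2 (I : Ideal R) (s : ℕ) : Prop :=
  ∀ i ≤ s, ∀ K : Ideal R, IsGeometricRI I K i → QuotS2 K

/-- The condition `AN_s` for `I`. -/
def ANcond [IsLocalRing R] (I : Ideal R) (s : ℕ) : Prop :=
  ∀ i ≤ s, ∀ K : Ideal R, IsResidualIntersection I K i → IsCMQuot R K

/-- The condition `AN_s⁻` for `I`. -/
def ANminus [IsLocalRing R] (I : Ideal R) (s : ℕ) : Prop :=
  ∀ i ≤ s, ∀ K : Ideal R, IsGeometricRI I K i → IsCMQuot R K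

/-- `I` is universally weakly `s`-residually `S₂`: for every finite set of
variables, the extension of `I` to `R(x₁, …, x_n)` is weakly `s`-residually `S₂`. -/
def UnivWeaklyResS2 [IsLocalRing R] (I : Ideal R) (s : ℕ) : Prop :=
  ∀ (n : ℕ)
    (hP : (Ideal.map (MvPolynomial.C (σ := Fin n)) (maximalIdeal R)).IsPrime),
    letI := hP
    WeaklyResS2 (Ideal.map
      ((algebraMap (MvPolynomial (Fin n) R)
        (Localization.AtPrime
          (Ideal.map (MvPolynomial.C (σ := Fin n)) (maximalIdeal R)))).comp
        (MvPolynomial.C)) I) s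

/-- The `j`-th Fitting ideal of (the module) `I`. -/
noncomputable def fittingIdeal (I : Ideal R) (j : ℕ) : Ideal R :=
  ⨆ (n : ℕ) (π : (Fin n → R) →ₗ[R] R) (_ : LinearMap.range π = I),
    Ideal.span {d : R | ∃ (v : Fin (n - j) → (Fin n → R)) (r : Fin (n - j) → Fin n),
      (∀ k, π (v k) = 0) ∧ d = Matrix.det (Matrix.of fun i k => v k (r i))}

/-- The set `Q(I)` of primes containing `Fitt_ℓ(I)` at which `R` has dimension `ℓ`
and `I` has analytic spread `ℓ`. -/
def QSet [IsLocalRing R] (I : Ideal R) (l : ℕ) : Set (PrimeSpectrum R) :=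
  {p | fittingIdeal I l ≤ p.asIdeal ∧
    rDim (Localization.AtPrime p.asIdeal) = (l : WithBot ℕ∞) ∧
    fiberDim (Ideal.map (algebraMap R (Localization.AtPrime p.asIdeal)) I)
      = (l : WithBot ℕ∞)}

/-- An ideal is integrally closed if it admits no larger ideal of which it is a
reduction. -/
def IsIntClosedIdeal (I : Ideal R) : Prop :=
  ∀ J : Ideal R, IsReduction I J → J = I

/-- A normal ideal: all powers are integrally closed. -/
def IsNormalIdeal (I : Ideal R) : Prop :=
  ∀ j : ℕ, IsIntClosedIdeal (I ^ j)

/-- `φ` is a presentation matrix of the ideal `I` (with `n = μ(I)` rows). -/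
def Presents {n m : ℕ} (φ : Matrix (Fin n) (Fin m) R) (I : Ideal R) : Prop :=
  muE I = (n : ℕ∞) ∧ ∃ π : (Fin n → R) →ₗ[R] R, LinearMap.range π = I ∧
    LinearMap.range (Matrix.toLin' φ) = LinearMap.ker π

/-- The ideal of `t × t` minors of a matrix. -/
noncomputable def minorsIdeal {n m : ℕ} (t : ℕ) (φ : Matrix (Fin n) (Fin m) R) : Ideal R :=
  Ideal.span {d : R | ∃ (r : Fin t → Fin n) (c : Fin t → Fin m),
    d = (φ.submatrix r c).det}

/-- The grade of an ideal: the supremum of lengths of regular sequences contained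
in it. -/
noncomputable def grade (I : Ideal R) : ℕ∞ :=
  sSup {n : ℕ∞ | ∃ rs : List R, (∀ x ∈ rs, x ∈ I) ∧
    RingTheory.Sequence.IsRegular R rs ∧ (rs.length : ℕ∞) = n}

end Defs

/-- `M` has projective dimension at most `n` over `R`. -/
def ProjDimLE (R : Type u) [CommRing R] :
    (n : ℕ) → (M : Type u) → [AddCommGroup M] → [Module R M] → Prop
  | 0, M, _, _ => Module.Projective R M
  | n + 1, M, _, _ => ∃ (k : ℕ) (f : (Fin k → R) →ₗ[R] M), Function.Surjective f ∧
      ProjDimLE R n ↥(LinearMap.ker f)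

section Defs2

variable {R : Type u} [CommRing R]

/-- `M` has projective dimension exactly `n` over `R`. -/
def ProjDimEq (R : Type u) [CommRing R] (M : Type u) [AddCommGroup M] [Module R M]
    (n : ℕ) : Prop :=
  ProjDimLE R n M ∧ ∀ m : ℕ, ProjDimLE R m M → n ≤ m

/-- A perfect ideal: the projective dimension of `R/I` equals the grade of `I`. -/
def IsPerfectIdeal (I : Ideal R) : Prop :=
  ∃ g : ℕ, grade I = (g : ℕ∞) ∧ ProjDimEq R (R ⧸ I) g

/-- The multiplicative set which is the complement of the union of the associated
primes of `R/H`. -/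
def assComplement (H : Ideal R) : Submonoid R where
  carrier := {r : R | ∀ p ∈ associatedPrimes R (R ⧸ H), r ∉ p}
  one_mem' := fun p hp => (Ideal.ne_top_iff_one p).mp hp.1.ne_top
  mul_mem' := fun {a b} ha hb p hp hab =>
    (hp.1.mem_or_mem hab).elim (ha p hp) (hb p hp)

/-- The `j`-th symbolic power of `H`. -/
noncomputable def symbolicPower (H : Ideal R) (j : ℕ) : Ideal R :=
  Ideal.comap (algebraMap R (Localization (assComplement H)))
    (Ideal.map (algebraMap R (Localization (assComplement H))) (H ^ j))

/-- Serre's condition `S₂` for a module. -/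
def ModuleS2 (S : Type u) [CommRing S] (M : Type v) [AddCommGroup M] [Module S M] : Prop :=
  ∀ (q : Ideal S) (hq : q.IsPrime),
    letI := hq
    min 2 (rDim ((Localization.AtPrime q) ⧸
        (Module.annihilator (Localization.AtPrime q) (LocalizedModule q.primeCompl M))))
      ≤ (mDepth (Localization.AtPrime q) (LocalizedModule q.primeCompl M) : WithBot ℕ∞)

/-- `M` is a maximal Cohen–Macaulay `S`-module. -/
def IsMCM (S : Type u) [CommRing S] (M : Type v) [AddCommGroup M] [Module S M] : Prop :=
  ∀ (q : Ideal S) (hq : q.IsMaximal),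
    letI := hq.isPrime
    (mDepth (Localization.AtPrime q) (LocalizedModule q.primeCompl M) : WithBot ℕ∞) =
      rDim (Localization.AtPrime q)

end Defs2

/-!
Let `K = I^{(2)}`. Linkage gives `K = αI + (Δ)`, and at every minimal prime of `I` it makes `I` the
ideal of a regular pair `(α, y)` with `Δ` a quadratic form in `α, y` in which `y²` has a unit
coefficient. Since `R` is Cohen–Macaulay, an ideal `(f, g)` with the same radical as `I` is unmixed,
so membership in it, and then in the powers `K^j`, can be tested at the minimal primes of `I`. Hence
`I^{(2j)} = K^j` and `K² = (α², Δ)K`, and every minimal reduction of `K^j` is generated by two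
elements.

Locally `K^j` is `(x, y)^n` with `n = 2j`. A two-generated reduction of `(x, y)^n` contains
`(x, y)^(2n-1)`, and `(x, y)^(2n-2)` is cyclic modulo it. The first fact gives `I^{(4j-1)} ⊆ core`.
By the second, each reduction cuts the `4j - 1` monomials of degree `4j - 2` down by at most one, so
at least `4j - 1` reductions are needed. Conversely the `2j` reductions
`(Δ^(j-1) (Δ - c α y), α^(2j))` together with the `2j - 1` reductions `(Δ^j, α^(2j-1) (α - c y))`,
for constants `c` with unit differences, intersect in `I^{(4j-1)}`: a common leading form of degree
`4j - 2` lies in too many principal ideals modulo powers of `α` and `Δ` to be nonzero.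
-/

section RegularPair

open Ideal RingTheory.Sequence Pointwise

variable {S : Type u} [CommRing S] {x y : S}

/-- Regular sequences of length two, allowing the ideal `(x, y)` to be the whole ring. -/
structure IsRegularPair (x y : S) : Prop where
  eq_zero_of_mul_eq_zero : ∀ c, x * c = 0 → c = 0
  dvd_of_dvd_mul : ∀ c, x ∣ y * c → x ∣ c

theorem isRegularPair_iff_isWeaklyRegular : IsRegularPair x y ↔ IsWeaklyRegular S [x, y] := by
  have hx : x • (⊤ : Submodule S S) = span {x} := by
    rw [← Submodule.ideal_span_singleton_smul, smul_eq_mul, mul_top]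
  have hy : IsSMulRegular (QuotSMulTop x S) y ↔ ∀ c, x ∣ y * c → x ∣ c := by
    simp only [isSMulRegular_quotient_iff_mem_of_smul_mem, hx, smul_eq_mul, mem_span_singleton]
  rw [isWeaklyRegular_cons_iff, isWeaklyRegular_singleton_iff, hy,
    isSMulRegular_iff_right_eq_zero_of_smul]
  exact ⟨fun h => ⟨h.1, h.2⟩, fun h => ⟨h.1, h.2⟩⟩

theorem left_mem_span_pair (x y : S) : x ∈ span {x, y} := subset_span (by simp)

theorem right_mem_span_pair (x y : S) : y ∈ span {x, y} := subset_span (by simp)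

theorem mul_mem_pow_of_le {I : Ideal S} {a b : S} {p q k : ℕ} (ha : a ∈ I ^ p) (hb : b ∈ I ^ q)
    (h : k ≤ p + q) : a * b ∈ I ^ k :=
  pow_le_pow_right h (by rw [pow_add]; exact mul_mem_mul ha hb)

theorem mem_span_pair_mul {f g z : S} {L : Ideal S} :
    z ∈ span {f, g} * L ↔ ∃ a ∈ L, ∃ b ∈ L, z = a * f + b * g := by
  simp only [span_insert, Ideal.sup_mul, Submodule.mem_sup, mem_span_singleton_mul]
  constructor
  · rintro ⟨_, ⟨a, ha, rfl⟩, _, ⟨b, hb, rfl⟩, rfl⟩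
    exact ⟨a, ha, b, hb, by ring⟩
  · rintro ⟨a, ha, b, hb, rfl⟩
    exact ⟨_, ⟨a, ha, rfl⟩, _, ⟨b, hb, rfl⟩, by ring⟩

theorem span_pair_pow_succ_le (x y : S) (k : ℕ) :
    span {x, y} ^ (k + 1) ≤ span {x} * span {x, y} ^ k ⊔ span {y ^ (k + 1)} := by
  induction k with
  | zero => simp [span_insert]
  | succ k ih =>
    calc span {x, y} ^ (k + 2)
        = span {x} * span {x, y} ^ (k + 1) ⊔ span {y} * span {x, y} ^ (k + 1) := by
          rw [pow_succ', ← Ideal.sup_mul, ← span_insert]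
      _ ≤ span {x} * span {x, y} ^ (k + 1) ⊔
            span {y} * (span {x} * span {x, y} ^ k ⊔ span {y ^ (k + 1)}) := by gcongr
      _ = span {x} * span {x, y} ^ (k + 1) ⊔
            span {x} * (span {y} * span {x, y} ^ k) ⊔ span {y ^ (k + 2)} := by
          rw [Ideal.mul_sup, mul_left_comm, span_singleton_mul_span_singleton, ← pow_succ',
            sup_assoc]
      _ ≤ span {x} * span {x, y} ^ (k + 1) ⊔ span {y ^ (k + 2)} := by
          refine sup_le_sup_right (sup_le le_rfl (mul_mono_right ?_)) _
          rw [pow_succ']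
          exact mul_mono_left (span_mono (by simp))

theorem exists_eq_mul_add_mul_pow_of_mem_pow (k : ℕ) {z : S} (hz : z ∈ span {x, y} ^ k) :
    ∃ a ∈ span {x, y} ^ (k - 1), ∃ c, z = x * a + c * y ^ k := by
  cases k with
  | zero => exact ⟨0, zero_mem _, z, by simp⟩
  | succ k =>
    obtain ⟨p, hp, q, hq, rfl⟩ := Submodule.mem_sup.1 (span_pair_pow_succ_le x y k hz)
    obtain ⟨a, ha, rfl⟩ := mem_span_singleton_mul.1 hp
    obtain ⟨c, rfl⟩ := mem_span_singleton'.1 hq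
    exact ⟨a, ha, c, rfl⟩

namespace IsRegularPair

theorem mul_left_cancel (h : IsRegularPair x y) {c d : S} (e : x * c = x * d) : c = d :=
  sub_eq_zero.1 (h.eq_zero_of_mul_eq_zero _ (by rw [mul_sub, e, sub_self]))

theorem exists_eq_mul_of_mul_eq_mul (h : IsRegularPair x y) {c d : S} (e : y * c = x * d) :
    ∃ e, c = x * e :=
  h.dvd_of_dvd_mul c ⟨d, e⟩

theorem pow_right (h : IsRegularPair x y) (n : ℕ) : IsRegularPair x (y ^ n) where
  eq_zero_of_mul_eq_zero := h.eq_zero_of_mul_eq_zero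
  dvd_of_dvd_mul c hc := by
    induction n with
    | zero => simpa using hc
    | succ n ih => exact ih (h.dvd_of_dvd_mul _ (by rwa [← mul_assoc, ← pow_succ']))

theorem mem_pow_sub_one_of_mul_mem_pow (h : IsRegularPair x y) (k : ℕ) {z : S}
    (hz : x * z ∈ span {x, y} ^ k) : z ∈ span {x, y} ^ (k - 1) := by
  obtain ⟨a, ha, c, hc⟩ := exists_eq_mul_add_mul_pow_of_mem_pow k hz
  obtain ⟨c', rfl⟩ := (h.pow_right k).exists_eq_mul_of_mul_eq_mul (c := c) (d := z - a)
    (by linear_combination -hc)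
  obtain rfl : z = a + c' * y ^ k := h.mul_left_cancel (by linear_combination hc)
  exact add_mem ha (mul_mem_left _ _
    (pow_le_pow_right (Nat.sub_le _ _) (pow_mem_pow (right_mem_span_pair x y) k)))

theorem mem_pow_of_pow_mul_mem_pow (h : IsRegularPair x y) (m k : ℕ) {z : S}
    (hz : x ^ m * z ∈ span {x, y} ^ (k + m)) : z ∈ span {x, y} ^ k := by
  induction m with
  | zero => simpa using hz
  | succ m ih =>
    rw [pow_succ', mul_assoc] at hz
    exact ih (h.mem_pow_sub_one_of_mul_mem_pow (k + (m + 1)) hz)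

theorem mem_of_mul_pow_add_mul_mem_pow (h : IsRegularPair x y) (n : ℕ) {z d : S}
    (hz : z * y ^ n + x * d ∈ span {x, y} ^ (n + 1)) : z ∈ span {x, y} := by
  obtain ⟨a, -, c, hc⟩ := exists_eq_mul_add_mul_pow_of_mem_pow (n + 1) hz
  obtain ⟨e, he⟩ := (h.pow_right n).exists_eq_mul_of_mul_eq_mul (c := z - c * y) (d := a - d)
    (by linear_combination hc)
  exact mem_span_pair.2 ⟨e, c, by linear_combination -he⟩

theorem coeff_mem_of_sum_mem_pow (h : IsRegularPair x y) (N : ℕ) (v : ℕ → S)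
    (hv : ∑ l ∈ Finset.range (N + 1), v l * (x ^ l * y ^ (N - l)) ∈ span {x, y} ^ (N + 1)) :
    ∀ l ≤ N, v l ∈ span {x, y} := by
  induction N generalizing v with
  | zero =>
    intro l hl
    obtain rfl : l = 0 := Nat.le_zero.1 hl
    simpa using hv
  | succ N ih =>
    have hsplit : ∑ l ∈ Finset.range (N + 2), v l * (x ^ l * y ^ (N + 1 - l)) =
        v 0 * y ^ (N + 1) +
          x * ∑ l ∈ Finset.range (N + 1), v (l + 1) * (x ^ l * y ^ (N - l)) := by
      rw [Finset.sum_range_succ', Finset.mul_sum, add_comm, pow_zero, one_mul, Nat.sub_zero]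
      congr 1
      refine Finset.sum_congr rfl fun l _ => ?_
      rw [Nat.add_sub_add_right]
      ring
    rw [hsplit] at hv
    have hv₀ : v 0 ∈ span {x, y} := h.mem_of_mul_pow_add_mul_mem_pow (N + 1) hv
    have hv₀y : v 0 * y ^ (N + 1) ∈ span {x, y} ^ (N + 2) :=
      mul_mem_pow_of_le (p := 1) (by rwa [pow_one])
        (pow_mem_pow (right_mem_span_pair x y) (N + 1)) (by omega)
    have htail := h.mem_pow_sub_one_of_mul_mem_pow _ ((Submodule.add_mem_iff_right _ hv₀y).1 hv)
    rintro (_ | l) hl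
    · exact hv₀
    · exact ih (fun l => v (l + 1)) htail l (by omega)

end IsRegularPair

end RegularPair

section PairReduction

open Ideal

variable {S : Type u} [CommRing S] {x y : S}

theorem span_pair_eq_of_isUnit {n : ℕ} {A B f₁ g₁ f g : S} (hA : IsUnit A)
    (hf : f = x * f₁ + A * y ^ n) (hg : g = x * g₁ + B * y ^ n)
    (hf₁ : f₁ ∈ span {x, y} ^ (n - 1)) (hg₁ : g₁ ∈ span {x, y} ^ (n - 1)) :
    ∃ f₂ ∈ span {x, y} ^ (n - 1), ∃ g₂ ∈ span {x, y} ^ (n - 1),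
      span {f, g} = span {y ^ n + x * f₂, x * g₂} := by
  obtain ⟨w, hw⟩ := hA.exists_left_inv
  refine ⟨w * f₁, mul_mem_left _ _ hf₁, g₁ - B * w * f₁,
    sub_mem hg₁ (mul_mem_left _ _ hf₁), ?_⟩
  apply le_antisymm <;> rw [span_le]
  · rintro z (rfl | rfl)
    · exact mem_span_pair.2 ⟨A, 0, by rw [hf]; linear_combination x * f₁ * hw⟩
    · exact mem_span_pair.2 ⟨B, 1, by rw [hg]; ring⟩
  · rintro z (rfl | rfl)
    · exact mem_span_pair.2 ⟨w, 0, by rw [hf]; linear_combination y ^ n * hw⟩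
    · exact mem_span_pair.2 ⟨-B * w, 1, by rw [hf, hg]; linear_combination -B * y ^ n * hw⟩

namespace IsRegularPair

theorem isUnit_or_isUnit_of_pow_le [IsLocalRing S] (h : IsRegularPair x y)
    (hx : x ∈ maximalIdeal S) {n k : ℕ} {A B f₁ g₁ f g : S}
    (hf : f = x * f₁ + A * y ^ n) (hg : g = x * g₁ + B * y ^ n)
    (hJ : span {x, y} ^ (k + n) ≤ span {f, g} * span {x, y} ^ k) : IsUnit A ∨ IsUnit B := by
  by_contra! hAB
  obtain ⟨a, ha, b, hb, hab⟩ :=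
    mem_span_pair_mul.1 (hJ (pow_mem_pow (right_mem_span_pair x y) (k + n)))
  obtain ⟨a₁, -, a₀, rfl⟩ := exists_eq_mul_add_mul_pow_of_mem_pow k ha
  obtain ⟨b₁, -, b₀, rfl⟩ := exists_eq_mul_add_mul_pow_of_mem_pow k hb
  obtain ⟨e, he⟩ := (h.pow_right (k + n)).exists_eq_mul_of_mul_eq_mul (c := 1 - a₀ * A - b₀ * B)
    (d := a₁ * f + a₀ * y ^ k * f₁ + b₁ * g + b₀ * y ^ k * g₁)
    (by rw [hf, hg, pow_add] at *; linear_combination hab)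
  refine (maximalIdeal.isMaximal S).ne_top ((eq_top_iff_one _).2 ?_)
  rw [show (1 : S) = x * e + a₀ * A + b₀ * B by linear_combination he]
  exact add_mem (add_mem (mul_mem_right _ _ hx) (mul_mem_left _ _ hAB.1)) (mul_mem_left _ _ hAB.2)

theorem exists_span_pair_eq_of_pow_le [IsLocalRing S] (h : IsRegularPair x y)
    (hx : x ∈ maximalIdeal S) {n k : ℕ} {f g : S}
    (hf : f ∈ span {x, y} ^ n) (hg : g ∈ span {x, y} ^ n)
    (hJ : span {x, y} ^ (k + n) ≤ span {f, g} * span {x, y} ^ k) :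
    ∃ f₂ ∈ span {x, y} ^ (n - 1), ∃ g₂ ∈ span {x, y} ^ (n - 1),
      span {f, g} = span {y ^ n + x * f₂, x * g₂} := by
  obtain ⟨f₁, hf₁, A, hf⟩ := exists_eq_mul_add_mul_pow_of_mem_pow n hf
  obtain ⟨g₁, hg₁, B, hg⟩ := exists_eq_mul_add_mul_pow_of_mem_pow n hg
  rcases h.isUnit_or_isUnit_of_pow_le hx hf hg hJ with hA | hB
  · exact span_pair_eq_of_isUnit hA hf hg hf₁ hg₁
  · rw [Set.pair_comm f g]
    exact span_pair_eq_of_isUnit hB hg hf hg₁ hf₁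

theorem exists_eq_add_of_mul_mem_span_mul_pow (h : IsRegularPair x y) {n k : ℕ} {f₁ g₁ z : S}
    (hz : x * z ∈ span {y ^ n + x * f₁, x * g₁} * span {x, y} ^ k) :
    ∃ a ∈ span {x, y} ^ (k - 1), ∃ b ∈ span {x, y} ^ (k - 1), ∃ c,
      z = a * (y ^ n + x * f₁) + b * (x * g₁) + c * (y ^ k * g₁) := by
  obtain ⟨a, ha, b, hb, e⟩ := mem_span_pair_mul.1 hz
  obtain ⟨a', rfl⟩ := (h.pow_right n).exists_eq_mul_of_mul_eq_mul (c := a)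
    (d := z - a * f₁ - b * g₁) (by linear_combination -e)
  obtain ⟨b₁, hb₁, b₀, rfl⟩ := exists_eq_mul_add_mul_pow_of_mem_pow k hb
  exact ⟨a', h.mem_pow_sub_one_of_mul_mem_pow _ ha, b₁, hb₁, b₀,
    h.mul_left_cancel (by linear_combination e)⟩

theorem pow_le_span_mul_pow_of_succ (h : IsRegularPair x y) {n k : ℕ} {f₁ g₁ : S} (hn : 1 ≤ n)
    (hk : n ≤ k + 1) (hf₁ : f₁ ∈ span {x, y} ^ (n - 1)) (hg₁ : g₁ ∈ span {x, y} ^ (n - 1))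
    (hJ : span {x, y} ^ (k + 1 + n) ≤ span {y ^ n + x * f₁, x * g₁} * span {x, y} ^ (k + 1)) :
    span {x, y} ^ (k + n) ≤ span {y ^ n + x * f₁, x * g₁} * span {x, y} ^ k := by
  intro z hz
  have hxz : x * z ∈ span {x, y} ^ (k + 1 + n) :=
    mul_mem_pow_of_le (p := 1) (by simpa using left_mem_span_pair x y) hz (by omega)
  obtain ⟨a, ha, b, hb, c, e⟩ := h.exists_eq_add_of_mul_mem_span_mul_pow (hJ hxz)
  obtain ⟨d, hd⟩ : ∃ d, k + 1 = d + n := ⟨k + 1 - n, by omega⟩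
  have hy : y ^ d ∈ span {x, y} ^ d := pow_mem_pow (right_mem_span_pair x y) d
  refine mem_span_pair_mul.2 ⟨a + c * (y ^ d * g₁), add_mem ha (mul_mem_left _ _ ?_),
    b - c * (y ^ d * f₁), sub_mem hb (mul_mem_left _ _ ?_), ?_⟩
  · exact mul_mem_pow_of_le hy hg₁ (by omega)
  · exact mul_mem_pow_of_le hy hf₁ (by omega)
  · rw [e, hd, pow_add]
    ring

theorem pow_le_span_mul_pow_sub_one (h : IsRegularPair x y) {n k : ℕ} {f₁ g₁ : S} (hn : 1 ≤ n)
    (hf₁ : f₁ ∈ span {x, y} ^ (n - 1)) (hg₁ : g₁ ∈ span {x, y} ^ (n - 1))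
    (hJ : span {x, y} ^ (k + n) ≤ span {y ^ n + x * f₁, x * g₁} * span {x, y} ^ k) :
    span {x, y} ^ (n - 1 + n) ≤ span {y ^ n + x * f₁, x * g₁} * span {x, y} ^ (n - 1) := by
  have hup : span {x, y} ^ (n - 1 + k + n) ≤
      span {y ^ n + x * f₁, x * g₁} * span {x, y} ^ (n - 1 + k) := by
    rw [add_assoc, pow_add, pow_add _ (n - 1) k, mul_left_comm]
    exact mul_mono_right hJ
  clear hJ
  induction k with
  | zero => exact hup
  | succ k ih => exact ih (h.pow_le_span_mul_pow_of_succ hn (by omega) hf₁ hg₁ hup)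

theorem pow_le_of_isReduction_pair [IsLocalRing S] (h : IsRegularPair x y)
    (hx : x ∈ maximalIdeal S) {n : ℕ} (hn : 1 ≤ n) {f g : S}
    (hJ : IsReduction (span {f, g}) (span {x, y} ^ n)) :
    span {x, y} ^ (2 * n - 1) ≤ span {f, g} ∧
    ∃ m ∈ span {x, y} ^ (2 * n - 2), span {x, y} ^ (2 * n - 2) ≤ span {f, g} ⊔ span {m} := by
  obtain ⟨hle, r, hr⟩ := hJ
  have hk : span {x, y} ^ (n * r + n) ≤ span {f, g} * span {x, y} ^ (n * r) := by
    rw [pow_mul, ← hr, ← pow_mul, Nat.mul_succ]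
  obtain ⟨f₁, hf₁, g₁, hg₁, hfg⟩ := h.exists_span_pair_eq_of_pow_le hx
    (hle (left_mem_span_pair f g)) (hle (right_mem_span_pair f g)) hk
  rw [hfg] at hk ⊢
  have hred := h.pow_le_span_mul_pow_sub_one hn hf₁ hg₁ hk
  have hy : y ^ (n - 1) ∈ span {x, y} ^ (n - 1) := pow_mem_pow (right_mem_span_pair x y) _
  refine ⟨?_, y ^ (n - 1) * g₁, mul_mem_pow_of_le hy hg₁ (by omega), fun z hz => ?_⟩
  · rw [show 2 * n - 1 = n - 1 + n by omega]
    exact hred.trans mul_le_left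
  · have hxz : x * z ∈ span {x, y} ^ (n - 1 + n) :=
      mul_mem_pow_of_le (p := 1) (by simpa using left_mem_span_pair x y) hz (by omega)
    obtain ⟨a, -, b, -, c, rfl⟩ := h.exists_eq_add_of_mul_mem_span_mul_pow (hred hxz)
    exact add_mem (mem_sup_left (mem_span_pair.2 ⟨a, b, rfl⟩))
      (mem_sup_right (mem_span_singleton'.2 ⟨c, rfl⟩))

end IsRegularPair

end PairReduction

section BinaryForm

open Ideal Polynomial

variable {S : Type u} [CommRing S]

/-- The value at `(x, y)` of the binary form of degree `k` whose dehomogenization is `P`, that is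
`∑ₗ Pₗ xˡ yᵏ⁻ˡ`. Coefficients of `P` beyond degree `k` are discarded. -/
noncomputable def formEval (x y : S) (k : ℕ) : S[X] →ₗ[S] S :=
  (MvPolynomial.aeval ![x, y]).toLinearMap ∘ₗ homogenizeLM k

variable {x y : S}

theorem formEval_eq_sum (k : ℕ) (P : S[X]) :
    formEval x y k P = ∑ l ∈ Finset.range (k + 1), P.coeff l * (x ^ l * y ^ (k - l)) := by
  simp only [formEval, LinearMap.comp_apply, homogenizeLM_apply, homogenize,
    AlgHom.toLinearMap_apply, map_sum]
  rw [Finset.Nat.sum_antidiagonal_eq_sum_range_succ_mk]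
  refine Finset.sum_congr rfl fun l _ => ?_
  simp [MvPolynomial.aeval_monomial, Finsupp.prod_fintype]

theorem formEval_mul {P Q : S[X]} {m n : ℕ} (hP : P.natDegree ≤ m) (hQ : Q.natDegree ≤ n) :
    formEval x y (m + n) (P * Q) = formEval x y m P * formEval x y n Q := by
  simp [formEval, homogenize_mul P Q hP hQ]

theorem formEval_pow {P : S[X]} {m : ℕ} (hP : P.natDegree ≤ m) (n : ℕ) :
    formEval x y (n * m) (P ^ n) = formEval x y m P ^ n := by
  induction n with
  | zero => simp [formEval]
  | succ n ih =>
    rw [pow_succ, pow_succ, Nat.succ_mul, formEval_mul (natDegree_pow_le_of_le n hP) hP, ih]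

theorem formEval_X_pow {m n : ℕ} (h : m ≤ n) : formEval x y n (X ^ m) = x ^ m * y ^ (n - m) := by
  simp [formEval, homogenize_X_pow h]

theorem formEval_C (c : S) (n : ℕ) : formEval x y n (C c) = c * y ^ n := by
  simp [formEval]

theorem formEval_mem_pow (k : ℕ) (P : S[X]) : formEval x y k P ∈ span {x, y} ^ k := by
  rw [formEval_eq_sum]
  refine sum_mem fun l _ => mul_mem_left _ _ (mul_mem_pow_of_le
    (pow_mem_pow (left_mem_span_pair x y) l) (pow_mem_pow (right_mem_span_pair x y) _) ?_)
  omega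

theorem exists_formEval_eq_of_mem_pow (k : ℕ) {z : S} (hz : z ∈ span {x, y} ^ k) :
    ∃ P : S[X], P.natDegree ≤ k ∧ formEval x y k P = z := by
  induction k generalizing z with
  | zero => exact ⟨C z, by simp, by simp [formEval_C]⟩
  | succ k ih =>
    obtain ⟨a, ha, c, rfl⟩ := exists_eq_mul_add_mul_pow_of_mem_pow _ hz
    obtain ⟨P, hP, rfl⟩ := ih ha
    refine ⟨X * P + C c, natDegree_add_le_of_degree_le ?_ (by simp), ?_⟩
    · exact (natDegree_mul_le_of_le natDegree_X_le hP).trans_eq (add_comm _ _)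
    · rw [map_add, formEval_C, add_comm k 1, formEval_mul natDegree_X_le hP, ← pow_one X,
        formEval_X_pow le_rfl]
      simp

theorem formEval_mem_pow_succ_of_map_eq_zero {k : ℕ} {P : S[X]}
    (hP : P.map (Ideal.Quotient.mk (span {x, y})) = 0) :
    formEval x y k P ∈ span {x, y} ^ (k + 1) := by
  rw [formEval_eq_sum]
  refine sum_mem fun l _ => ?_
  have hl : P.coeff l ∈ span {x, y} := by
    rw [← Ideal.Quotient.eq_zero_iff_mem, ← coeff_map, hP, coeff_zero]
  have hmon : x ^ l * y ^ (k - l) ∈ span {x, y} ^ k :=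
    mul_mem_pow_of_le (pow_mem_pow (left_mem_span_pair x y) l)
      (pow_mem_pow (right_mem_span_pair x y) _) (by omega)
  exact mul_mem_pow_of_le (p := 1) (by rwa [pow_one]) hmon (by omega)

theorem IsRegularPair.map_eq_zero_of_formEval_mem (h : IsRegularPair x y) {k : ℕ} {P : S[X]}
    (hP : P.natDegree ≤ k) (hmem : formEval x y k P ∈ span {x, y} ^ (k + 1)) :
    P.map (Ideal.Quotient.mk (span {x, y})) = 0 := by
  rw [formEval_eq_sum] at hmem
  ext l
  rw [coeff_map, coeff_zero, Ideal.Quotient.eq_zero_iff_mem]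
  rcases le_or_gt l k with hl | hl
  · exact h.coeff_mem_of_sum_mem_pow k P.coeff hmem l hl
  · rw [coeff_eq_zero_of_natDegree_lt (hP.trans_lt hl)]
    exact zero_mem _

theorem IsRegularPair.map_eq_map_of_formEval_sub_mem (h : IsRegularPair x y) {k : ℕ} {P Q : S[X]}
    (hP : P.natDegree ≤ k) (hQ : Q.natDegree ≤ k)
    (hmem : formEval x y k P - formEval x y k Q ∈ span {x, y} ^ (k + 1)) :
    P.map (Ideal.Quotient.mk (span {x, y})) = Q.map (Ideal.Quotient.mk (span {x, y})) := by
  rw [← sub_eq_zero, ← Polynomial.map_sub]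
  exact h.map_eq_zero_of_formEval_mem (natDegree_sub_le_of_le hP hQ |>.trans_eq (max_self k))
    (by rwa [map_sub])

open scoped Classical in
theorem formEval_ofFn {N : ℕ} (w : Fin (N + 1) → S) :
    formEval x y N (ofFn (N + 1) w) = ∑ l, w l * (x ^ (l : ℕ) * y ^ (N - l)) := by
  rw [formEval_eq_sum, Finset.sum_range]
  exact Finset.sum_congr rfl fun l _ => by rw [ofFn_coeff_eq_val_of_lt w l.2]

open scoped Classical in
theorem exists_forall_formEval_ofFn_mem {N : ℕ} {J : Ideal S} {m : S} (hm : m ∈ span {x, y} ^ N)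
    (hpow : span {x, y} ^ (N + 1) ≤ J) (hcyclic : span {x, y} ^ N ≤ J ⊔ span {m}) :
    ∃ c : Fin (N + 1) → S, ∀ w, ∑ l, c l * w l ∈ span {x, y} →
      formEval x y N (ofFn (N + 1) w) ∈ J := by
  have hc (l : Fin (N + 1)) : ∃ c, x ^ (l : ℕ) * y ^ (N - l) - c * m ∈ J := by
    have hmon : x ^ (l : ℕ) * y ^ (N - l) ∈ span {x, y} ^ N :=
      mul_mem_pow_of_le (pow_mem_pow (left_mem_span_pair x y) _)
        (pow_mem_pow (right_mem_span_pair x y) _) (by omega)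
    obtain ⟨p, hp, q, hq, e⟩ := Submodule.mem_sup.1 (hcyclic hmon)
    obtain ⟨c, rfl⟩ := mem_span_singleton'.1 hq
    exact ⟨c, by rwa [← e, add_sub_cancel_right]⟩
  choose c hc using hc
  refine ⟨c, fun w hw => ?_⟩
  have hsplit : formEval x y N (ofFn (N + 1) w) =
      ∑ l, w l * (x ^ (l : ℕ) * y ^ (N - l) - c l * m) + (∑ l, c l * w l) * m := by
    rw [formEval_ofFn, Finset.sum_mul, ← Finset.sum_add_distrib]
    exact Finset.sum_congr rfl fun l _ => by ring
  rw [hsplit]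
  exact add_mem (sum_mem fun l _ => mul_mem_left _ _ (hc l))
    (hpow (mul_mem_pow_of_le (p := 1) (by rwa [pow_one]) hm (by omega)))

theorem IsRegularPair.lt_of_iInf_le_pow (h : IsRegularPair x y) (hne : span {x, y} ≠ ⊤) {N t : ℕ}
    (J : Fin t → Ideal S) (m : Fin t → S) (hm : ∀ i, m i ∈ span {x, y} ^ N)
    (hpow : ∀ i, span {x, y} ^ (N + 1) ≤ J i)
    (hcyclic : ∀ i, span {x, y} ^ N ≤ J i ⊔ span {m i})
    (hinf : ⨅ i, J i ≤ span {x, y} ^ (N + 1)) : N < t := by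
  classical
  have := Ideal.Quotient.nontrivial_iff.2 hne
  let π := Ideal.Quotient.mk (span {x, y})
  choose c hc using fun i => exists_forall_formEval_ofFn_mem (hm i) (hpow i) (hcyclic i)
  let T := Matrix.mulVecLin (Matrix.of fun i l => π (c i l))
  refine Nat.succ_le_iff.1 (le_of_fin_injective _ T (LinearMap.ker_eq_bot.1 ?_))
  refine LinearMap.ker_eq_bot'.2 fun v hv => ?_
  choose w hw using fun l => Ideal.Quotient.mk_surjective (v l)
  have hform : formEval x y N (ofFn (N + 1) w) ∈ span {x, y} ^ (N + 1) := by
    refine hinf ((mem_iInf).2 fun i => hc i w ?_)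
    rw [← Ideal.Quotient.eq_zero_iff_mem, map_sum]
    simp only [map_mul, hw]
    exact congrFun hv i
  have hzero := h.map_eq_zero_of_formEval_mem
    (Nat.lt_succ_iff.1 (ofFn_natDegree_lt N.succ_pos w)) hform
  ext l
  rw [← hw l, ← ofFn_coeff_eq_val_of_lt w l.2, ← coeff_map, hzero, coeff_zero, Pi.zero_apply]

end BinaryForm

section CommonForm

open Polynomial

variable {A : Type u} [CommRing A]

theorem eq_zero_of_natDegree_lt_of_isUnit_sub {s : Finset ℕ} {μ : ℕ → A}
    (hμ : ∀ k ∈ s, ∀ l ∈ s, k ≠ l → IsUnit (μ k - μ l)) {p : A[X]} (hdeg : p.natDegree < s.card)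
    (hp : ∀ l ∈ s, p.eval (μ l) = 0) : p = 0 := by
  have hdvd : ∏ l ∈ s, (X - C (μ l)) ∣ p := by
    refine Finset.prod_dvd_of_coprime (fun k hk l hl hkl => ?_) fun l hl => ?_
    · exact isCoprime_X_sub_C_of_isUnit_sub (hμ k hk l hl hkl)
    · exact dvd_iff_isRoot.2 (hp l hl)
  obtain ⟨q, rfl⟩ := hdvd
  have hmonic : (∏ l ∈ s, (X - C (μ l))).Monic :=
    monic_prod_of_monic _ _ fun l _ => monic_X_sub_C _
  by_contra hne
  have := Nontrivial.of_polynomial_ne hne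
  rw [hmonic.natDegree_mul' (right_ne_zero_of_mul hne),
    natDegree_finsetProd_X_sub_C_eq_card] at hdeg
  omega

theorem X_pow_dvd_of_forall_coeff_mul_pow_eq_zero {n : ℕ} {U ζ : A[X]} (hU : IsUnit (U.coeff 0))
    (h : ∀ r < n, ((X * U) ^ r * ζ).coeff (n - 1) = 0) : X ^ n ∣ ζ := by
  suffices ∀ s ≤ n, X ^ s ∣ ζ from this n le_rfl
  intro s hs
  induction s with
  | zero => simp
  | succ s ih =>
    obtain ⟨η, hη⟩ := ih (by omega)
    have hcoeff := h (n - 1 - s) (by omega)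
    have hshift : (X * U) ^ (n - 1 - s) * ζ = X ^ (n - 1) * (U ^ (n - 1 - s) * η) := by
      rw [hη, mul_pow, mul_mul_mul_comm, ← pow_add, Nat.sub_add_cancel (by omega)]
    rw [hshift, coeff_X_pow_mul', if_pos le_rfl, Nat.sub_self, mul_coeff_zero,
      coeff_zero_eq_eval_zero (U ^ _), eval_pow, ← coeff_zero_eq_eval_zero] at hcoeff
    obtain ⟨θ, rfl⟩ := X_dvd_iff.2 ((hU.pow _).mul_right_eq_zero.1 hcoeff)
    exact ⟨θ, by rw [hη]; ring⟩

theorem coeff_sum_pow_mul_eq_eval (n m : ℕ) (w ζ : A[X]) (μ : A) :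
    (ζ * ∑ r ∈ Finset.range n, (C μ * w) ^ r).coeff m =
      (∑ r ∈ Finset.range n, C ((w ^ r * ζ).coeff m) * X ^ r).eval μ := by
  rw [Finset.mul_sum, finsetSum_coeff, eval_finsetSum]
  refine Finset.sum_congr rfl fun r _ => ?_
  rw [mul_pow, ← C_pow, mul_left_comm, coeff_C_mul, mul_comm ζ, eval_mul, eval_C, eval_pow, eval_X,
    mul_comm]

theorem X_pow_dvd_sub_mul_sum {D U V p a b : A[X]} {i n : ℕ} {μ : A} (hUV : V * X ^ n + U * D = 1)
    (hp : p = D ^ i * (D - C μ * X) * a + X ^ n * b) :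
    X ^ n ∣ a - p * U ^ (i + 1) * ∑ r ∈ Finset.range n, (C μ * (X * U)) ^ r := by
  set π := Ideal.Quotient.mk (Ideal.span {(X : A[X]) ^ n})
  have hX : π X ^ n = 0 := by
    rw [← map_pow, Ideal.Quotient.eq_zero_iff_mem]
    exact Ideal.mem_span_singleton_self _
  have hUD : π U * π D = 1 := by
    simpa only [map_add, map_mul, map_pow, hX, mul_zero, zero_add, map_one] using congrArg π hUV
  set τ := C μ * (X * U)
  have hτ : π τ ^ n = 0 := by
    simp only [τ, map_mul, mul_pow, hX, zero_mul, mul_zero]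
  have hζ : π (p * U ^ (i + 1)) = (1 - π τ) * π a := by
    calc π (p * U ^ (i + 1)) = (π U * π D) ^ i * (π U * π D - π τ) * π a := by
          rw [hp]
          simp only [map_mul, map_add, map_sub, map_pow, hX, τ]
          ring
      _ = (1 - π τ) * π a := by rw [hUD, one_pow, one_mul]
  rw [← Ideal.mem_span_singleton, ← Ideal.Quotient.eq, map_mul, hζ, map_sum]
  simp only [map_pow]
  rw [mul_right_comm, mul_neg_geom_sum, hτ, sub_zero, one_mul]

theorem X_pow_dvd_of_forall_eq_mul_add {D p : A[X]} {i n : ℕ} (hn : 1 ≤ n) (hD : IsCoprime X D)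
    {μ : ℕ → A} (hμ : ∀ k < n, ∀ l < n, k ≠ l → IsUnit (μ k - μ l))
    (h : ∀ l < n, ∃ a b : A[X], a.coeff (n - 1) = 0 ∧
      p = D ^ i * (D - C (μ l) * X) * a + X ^ n * b) : X ^ n ∣ p := by
  obtain ⟨V, U, hUV⟩ : IsCoprime (X ^ n) D := hD.pow_left
  have hU : IsCoprime (X ^ n) U := ⟨V, D, by rw [mul_comm D, hUV]⟩
  have hU₀ : IsUnit (U.coeff 0) := by
    obtain ⟨c, d, hcd⟩ := (IsCoprime.pow_left_iff hn).1 hU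
    refine IsUnit.of_mul_eq_one_right (d.coeff 0) ?_
    simpa [mul_coeff_zero] using congrArg (coeff · 0) hcd
  refine (hU.pow_right (n := i + 1)).dvd_of_dvd_mul_right
    (X_pow_dvd_of_forall_coeff_mul_pow_eq_zero hU₀ fun r hr => ?_)
  set q := ∑ r ∈ Finset.range n, C (((X * U) ^ r * (p * U ^ (i + 1))).coeff (n - 1)) * X ^ r
  suffices q = 0 by
    simpa [q, finsetSum_coeff, coeff_C_mul, coeff_X_pow, hr] using congrArg (coeff · r) this
  refine eq_zero_of_natDegree_lt_of_isUnit_sub (s := Finset.range n) (μ := μ)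
    (fun k hk l hl => hμ k (Finset.mem_range.1 hk) l (Finset.mem_range.1 hl)) ?_ fun l hl => ?_
  · rw [Finset.card_range, ← Nat.le_sub_one_iff_lt hn]
    refine natDegree_sum_le_of_forall_le _ _ fun r hr => ?_
    exact (natDegree_C_mul_X_pow_le _ r).trans (Nat.le_sub_one_of_lt (Finset.mem_range.1 hr))
  · obtain ⟨a, b, ha, hp⟩ := h l (Finset.mem_range.1 hl)
    have hcoeff := X_pow_dvd_iff.1 (X_pow_dvd_sub_mul_sum hUV hp) (n - 1) (by omega)
    rwa [coeff_sub, ha, zero_sub, neg_eq_zero, coeff_sum_pow_mul_eq_eval] at hcoeff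

theorem eq_of_X_pow_mul_eq_mul_add {E b c d : A[X]} {m : ℕ} (hE : IsCoprime X E)
    (hc : c.natDegree < m) (h : X ^ m * b = E * c + X ^ m * d) : b = d := by
  have hdvd : X ^ m ∣ c :=
    hE.pow_left.dvd_of_dvd_mul_left ⟨b - d, by linear_combination -h⟩
  have hc₀ : c = 0 := by
    ext k
    rcases lt_or_ge k m with hk | hk
    · rw [X_pow_dvd_iff.1 hdvd k hk, coeff_zero]
    · rw [coeff_eq_zero_of_natDegree_lt (hc.trans_le hk), coeff_zero]
  refine (monic_X_pow m).isRegular.left ?_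
  simpa [hc₀] using h

theorem eq_zero_of_forall_eq_mul_add {D p : A[X]} {i n : ℕ} (hn : 2 ≤ n) (hD : IsCoprime X D)
    {μ : ℕ → A} (hμ₀ : μ 0 = 0) (hμ : ∀ k < n, ∀ l < n, k ≠ l → IsUnit (μ k - μ l))
    (h : ∀ l < n, ∃ a b : A[X], a.natDegree ≤ n - 2 ∧
      p = D ^ i * (D - C (μ l) * X) * a + X ^ n * b)
    (h' : ∀ l < n, 1 ≤ l → ∃ c d : A[X], c.natDegree ≤ n - 2 ∧ d.natDegree ≤ n - 2 ∧
      p = D ^ (i + 1) * c + X ^ (n - 1) * (X - C (μ l)) * d) : p = 0 := by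
  obtain ⟨b, rfl⟩ : X ^ n ∣ p := by
    refine X_pow_dvd_of_forall_eq_mul_add (i := i) (by omega) hD hμ fun l hl => ?_
    obtain ⟨a, b, ha, e⟩ := h l hl
    exact ⟨a, b, coeff_eq_zero_of_natDegree_lt (by omega), e⟩
  have hb : ∀ l < n, 1 ≤ l → ∃ d : A[X], d.natDegree ≤ n - 2 ∧ X * b = (X - C (μ l)) * d := by
    intro l hl hl₁
    obtain ⟨c, d, hc, hd, e⟩ := h' l hl hl₁
    rw [← pow_sub_one_mul (by omega : n ≠ 0), mul_assoc, mul_assoc] at e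
    exact ⟨d, hd, eq_of_X_pow_mul_eq_mul_add hD.pow_right (by omega) e⟩
  suffices b = 0 by rw [this, mul_zero]
  refine eq_zero_of_natDegree_lt_of_isUnit_sub (s := Finset.Ico 1 n) (μ := μ)
    (fun k hk l hl => hμ k (Finset.mem_Ico.1 hk).2 l (Finset.mem_Ico.1 hl).2) ?_ fun l hl => ?_
  · obtain ⟨d, hd, e⟩ := hb 1 (by omega) le_rfl
    rw [Nat.card_Ico]
    rcases eq_or_ne b 0 with rfl | hne
    · rw [natDegree_zero]
      omega
    · have := Nontrivial.of_polynomial_ne hne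
      have := natDegree_X_mul hne
      have := (congrArg natDegree e).trans_le (natDegree_mul_le_of_le (natDegree_X_sub_C_le _) hd)
      omega
  · obtain ⟨hl₁, hln⟩ := Finset.mem_Ico.1 hl
    obtain ⟨d, -, e⟩ := hb l hln hl₁
    have hunit : IsUnit (μ l) := by
      simpa [hμ₀] using hμ l hln 0 (by omega) (by omega)
    refine hunit.mul_right_eq_zero.1 ?_
    simpa using congrArg (eval (μ l)) e

end CommonForm

section LeadingForm

open Ideal Polynomial

variable {S : Type u} [CommRing S] {x y : S}

theorem formEval_X_pow_self (n : ℕ) : formEval x y n (X ^ n) = x ^ n := by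
  rw [formEval_X_pow le_rfl, Nat.sub_self, pow_zero, mul_one]

theorem natDegree_sub_C_mul_X_le {D : S[X]} (hD : D.natDegree ≤ 2) (c : S) :
    (D - C c * X).natDegree ≤ 2 :=
  natDegree_sub_le_of_le hD (((natDegree_C_mul_le c X).trans (natDegree_X_le.trans one_le_two)))

theorem formEval_pow_mul_sub_C_mul_X {D : S[X]} (hD : D.natDegree ≤ 2) (j : ℕ) (c : S) :
    formEval x y (2 * j + 2) (D ^ j * (D - C c * X)) =
      formEval x y 2 D ^ j * (formEval x y 2 D - c * (x * y)) := by
  have hX : formEval x y 2 (C c * X) = c * (x * y) := by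
    have := formEval_X_pow (x := x) (y := y) (show 1 ≤ 2 by omega)
    rw [pow_one, pow_one, pow_one] at this
    rw [← smul_eq_C_mul, map_smul, this, smul_eq_mul]
  rw [mul_comm 2 j, formEval_mul (natDegree_pow_le_of_le j hD) (natDegree_sub_C_mul_X_le hD c),
    formEval_pow hD, map_sub, hX]

theorem natDegree_pow_succ_le {D : S[X]} (hD : D.natDegree ≤ 2) (j : ℕ) :
    (D ^ (j + 1)).natDegree ≤ 2 * j + 2 := by
  have := natDegree_pow_le_of_le (j + 1) hD
  omega

theorem formEval_pow_succ {D : S[X]} (hD : D.natDegree ≤ 2) (j : ℕ) :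
    formEval x y (2 * j + 2) (D ^ (j + 1)) = formEval x y 2 D ^ (j + 1) := by
  rw [← formEval_pow hD, show (j + 1) * 2 = 2 * j + 2 by ring]

theorem formEval_X_pow_mul_X_sub_C (n : ℕ) (c : S) :
    formEval x y (n + 1) (X ^ n * (X - C c)) = x ^ n * (x - c * y) := by
  rw [formEval_mul (natDegree_X_pow_le n) (natDegree_X_sub_C_le c), formEval_X_pow_self, map_sub,
    formEval_C, ← pow_one X, formEval_X_pow_self, pow_one, pow_one]

namespace IsRegularPair

theorem isCoprime_map_of_isReduction (h : IsRegularPair x y) {n : ℕ} {P Q : S[X]}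
    (hP : P.natDegree ≤ n) (hQ : Q.natDegree ≤ n)
    (hJ : IsReduction (span {formEval x y n P, formEval x y n Q}) (span {x, y} ^ n)) :
    IsCoprime (P.map (Ideal.Quotient.mk (span {x, y})))
      (Q.map (Ideal.Quotient.mk (span {x, y}))) := by
  obtain ⟨-, r, hr⟩ := hJ
  have hy : y ^ (n * r + n) ∈
      span {formEval x y n P, formEval x y n Q} * span {x, y} ^ (n * r) := by
    rw [pow_mul _ n r, ← hr, ← pow_mul, Nat.mul_succ]
    exact pow_mem_pow (right_mem_span_pair x y) _
  obtain ⟨a, ha, b, hb, e⟩ := mem_span_pair_mul.1 hy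
  obtain ⟨A, hA, rfl⟩ := exists_formEval_eq_of_mem_pow _ ha
  obtain ⟨B, hB, rfl⟩ := exists_formEval_eq_of_mem_pow _ hb
  refine ⟨A.map (Ideal.Quotient.mk _), B.map (Ideal.Quotient.mk _), ?_⟩
  rw [← Polynomial.map_mul, ← Polynomial.map_mul, ← Polynomial.map_add,
    ← Polynomial.map_one (Ideal.Quotient.mk _)]
  refine h.map_eq_map_of_formEval_sub_mem (k := n * r + n)
    (natDegree_add_le_of_degree_le (natDegree_mul_le_of_le hA hP) (natDegree_mul_le_of_le hB hQ))
    (by simp) ?_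
  rw [map_add, formEval_mul hA hP, formEval_mul hB hQ, ← C_1, formEval_C, ← e, one_mul, sub_self]
  exact zero_mem _

theorem mem_span_mul_pow_succ_of_mem_pow (h : IsRegularPair x y) {n s : ℕ} {P Q : S[X]}
    (hP : P.natDegree ≤ n) (hQ : Q.Monic) (hQn : Q.natDegree = n)
    (hPQ : IsCoprime (P.map (Ideal.Quotient.mk (span {x, y})))
      (Q.map (Ideal.Quotient.mk (span {x, y})))) (hs : s < n) {z : S}
    (hz : z ∈ span {formEval x y n P, formEval x y n Q} * span {x, y} ^ s)
    (hz' : z ∈ span {x, y} ^ (s + n + 1)) :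
    z ∈ span {formEval x y n P, formEval x y n Q} * span {x, y} ^ (s + 1) := by
  obtain ⟨a, ha, b, hb, rfl⟩ := mem_span_pair_mul.1 hz
  obtain ⟨A, hA, rfl⟩ := exists_formEval_eq_of_mem_pow _ ha
  obtain ⟨B, hB, rfl⟩ := exists_formEval_eq_of_mem_pow _ hb
  rw [← formEval_mul hA hP, ← formEval_mul hB hQn.le, ← map_add] at hz'
  have hrel := h.map_eq_zero_of_formEval_mem (natDegree_add_le_of_degree_le
    (natDegree_mul_le_of_le hA hP) (natDegree_mul_le_of_le hB hQn.le)) hz'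
  rw [Polynomial.map_add, Polynomial.map_mul, Polynomial.map_mul] at hrel
  set π := Ideal.Quotient.mk (span {x, y})
  have hA₀ : A.map π = 0 := by
    have hdvd : Q.map π ∣ A.map π := hPQ.symm.dvd_of_dvd_mul_right
      ⟨-B.map π, by linear_combination hrel⟩
    by_contra hne
    have := Nontrivial.of_polynomial_ne hne
    refine (hQ.map π).not_dvd_of_natDegree_lt hne ?_ hdvd
    rw [hQ.natDegree_map, hQn]
    exact (natDegree_map_le.trans hA).trans_lt hs
  have hB₀ : B.map π = 0 := by
    rw [hA₀, zero_mul, zero_add] at hrel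
    exact (hQ.map π).mul_left_eq_zero_iff.1 hrel
  exact mem_span_pair_mul.2 ⟨_, formEval_mem_pow_succ_of_map_eq_zero hA₀, _,
    formEval_mem_pow_succ_of_map_eq_zero hB₀, rfl⟩

theorem mem_span_mul_pow_of_mem_pow (h : IsRegularPair x y) {n k : ℕ} {P Q : S[X]}
    (hP : P.natDegree ≤ n) (hQ : Q.Monic) (hQn : Q.natDegree = n)
    (hPQ : IsCoprime (P.map (Ideal.Quotient.mk (span {x, y})))
      (Q.map (Ideal.Quotient.mk (span {x, y})))) (hk : k ≤ n) {z : S}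
    (hz : z ∈ span {formEval x y n P, formEval x y n Q}) (hz' : z ∈ span {x, y} ^ (k + n)) :
    z ∈ span {formEval x y n P, formEval x y n Q} * span {x, y} ^ k := by
  induction k with
  | zero => rwa [pow_zero, mul_one]
  | succ k ih =>
    exact h.mem_span_mul_pow_succ_of_mem_pow hP hQ hQn hPQ (by omega)
      (ih (by omega) (pow_le_pow_right (by omega) hz')) (by rwa [add_right_comm])

theorem exists_map_eq_mul_add_mul (h : IsRegularPair x y) {n k : ℕ} {P Q p : S[X]}
    (hP : P.natDegree ≤ n) (hQ : Q.Monic) (hQn : Q.natDegree = n) (hk : k ≤ n)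
    (hp : p.natDegree ≤ k + n)
    (hJ : IsReduction (span {formEval x y n P, formEval x y n Q}) (span {x, y} ^ n))
    (hz : formEval x y (k + n) p ∈ span {formEval x y n P, formEval x y n Q}) :
    ∃ a b : (S ⧸ span {x, y})[X], a.natDegree ≤ k ∧ b.natDegree ≤ k ∧
      p.map (Ideal.Quotient.mk _) =
        P.map (Ideal.Quotient.mk _) * a + Q.map (Ideal.Quotient.mk _) * b := by
  obtain ⟨a, ha, b, hb, e⟩ := mem_span_pair_mul.1 (h.mem_span_mul_pow_of_mem_pow hP hQ hQn
    (h.isCoprime_map_of_isReduction hP hQn.le hJ) hk hz (formEval_mem_pow _ _))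
  obtain ⟨A, hA, rfl⟩ := exists_formEval_eq_of_mem_pow _ ha
  obtain ⟨B, hB, rfl⟩ := exists_formEval_eq_of_mem_pow _ hb
  refine ⟨A.map (Ideal.Quotient.mk _), B.map (Ideal.Quotient.mk _), natDegree_map_le.trans hA,
    natDegree_map_le.trans hB, ?_⟩
  rw [← Polynomial.map_mul, ← Polynomial.map_mul, ← Polynomial.map_add, mul_comm P, mul_comm Q]
  refine h.map_eq_map_of_formEval_sub_mem hp
    (natDegree_add_le_of_degree_le (natDegree_mul_le_of_le hA hP)
      (natDegree_mul_le_of_le hB hQn.le)) ?_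
  rw [map_add, formEval_mul hA hP, formEval_mul hB hQn.le, ← e, sub_self]
  exact zero_mem _

theorem isCoprime_X_map_of_isReduction (h : IsRegularPair x y) {j : ℕ} {D : S[X]}
    (hD : D.natDegree ≤ 2)
    (hJ : IsReduction (span {formEval x y 2 D ^ (j + 1), x ^ (2 * j + 2)})
      (span {x, y} ^ (2 * j + 2))) : IsCoprime X (D.map (Ideal.Quotient.mk (span {x, y}))) := by
  rw [← formEval_pow_succ hD, ← formEval_X_pow_self (x := x) (y := y)] at hJ
  have hcop := h.isCoprime_map_of_isReduction
    (natDegree_pow_succ_le hD j) (natDegree_X_pow_le _) hJ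
  rw [Polynomial.map_pow, Polynomial.map_pow, map_X] at hcop
  exact ((IsCoprime.pow_iff (by omega) (by omega)).1 hcop).symm

theorem exists_map_eq_mul_add_X_pow_mul (h : IsRegularPair x y) {j : ℕ} {D p : S[X]}
    (hD : D.natDegree ≤ 2) (hp : p.natDegree ≤ 2 * j + (2 * j + 2)) {c : S}
    (hJ : IsReduction (span {formEval x y 2 D ^ j * (formEval x y 2 D - c * (x * y)),
      x ^ (2 * j + 2)}) (span {x, y} ^ (2 * j + 2)))
    (hz : formEval x y (2 * j + (2 * j + 2)) p ∈
      span {formEval x y 2 D ^ j * (formEval x y 2 D - c * (x * y)), x ^ (2 * j + 2)}) :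
    ∃ a b : (S ⧸ span {x, y})[X], a.natDegree ≤ 2 * j ∧
      p.map (Ideal.Quotient.mk _) = D.map (Ideal.Quotient.mk _) ^ j *
        (D.map (Ideal.Quotient.mk _) - C (Ideal.Quotient.mk _ c) * X) * a +
          X ^ (2 * j + 2) * b := by
  rw [← formEval_pow_mul_sub_C_mul_X hD, ← formEval_X_pow_self (x := x) (y := y)] at hJ hz
  have hdeg : (D ^ j * (D - C c * X)).natDegree ≤ 2 * j + 2 :=
    (natDegree_mul_le_of_le (natDegree_pow_le_of_le j hD)
      (natDegree_sub_C_mul_X_le hD c)).trans_eq (by ring)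
  nontriviality S
  obtain ⟨a, b, ha, -, e⟩ := h.exists_map_eq_mul_add_mul hdeg (monic_X_pow _) (natDegree_X_pow _)
    (by omega) hp hJ hz
  exact ⟨a, b, ha, by simpa using e⟩

theorem exists_map_eq_pow_mul_add_mul (h : IsRegularPair x y) {j : ℕ} {D p : S[X]}
    (hD : D.natDegree ≤ 2) (hp : p.natDegree ≤ 2 * j + (2 * j + 2)) {c : S}
    (hJ : IsReduction (span {formEval x y 2 D ^ (j + 1), x ^ (2 * j + 1) * (x - c * y)})
      (span {x, y} ^ (2 * j + 2)))
    (hz : formEval x y (2 * j + (2 * j + 2)) p ∈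
      span {formEval x y 2 D ^ (j + 1), x ^ (2 * j + 1) * (x - c * y)}) :
    ∃ a b : (S ⧸ span {x, y})[X], a.natDegree ≤ 2 * j ∧ b.natDegree ≤ 2 * j ∧
      p.map (Ideal.Quotient.mk _) = D.map (Ideal.Quotient.mk _) ^ (j + 1) * a +
        X ^ (2 * j + 1) * (X - C (Ideal.Quotient.mk _ c)) * b := by
  rw [← formEval_pow_succ hD, ← formEval_X_pow_mul_X_sub_C] at hJ hz
  have hmonic : (X ^ (2 * j + 1) * (X - C c)).Monic := (monic_X_pow _).mul (monic_X_sub_C c)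
  nontriviality S
  have hmonic_deg : (X ^ (2 * j + 1) * (X - C c)).natDegree = 2 * j + 2 := by
    rw [(monic_X_pow _).natDegree_mul (monic_X_sub_C c), natDegree_X_pow, natDegree_X_sub_C]
  obtain ⟨a, b, ha, hb, e⟩ := h.exists_map_eq_mul_add_mul (natDegree_pow_succ_le hD j) hmonic
    hmonic_deg (by omega) hp hJ hz
  exact ⟨a, b, ha, hb, by simpa using e⟩

theorem mem_pow_succ_of_forall_isReduction (h : IsRegularPair x y) {j : ℕ} {Δ : S}
    (hΔ : Δ ∈ span {x, y} ^ 2) {c : ℕ → S} (hc₀ : c 0 = 0)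
    (hc : ∀ k < 2 * j + 2, ∀ l < 2 * j + 2, k ≠ l → IsUnit (c k - c l))
    (hJ : ∀ l < 2 * j + 2, IsReduction (span {Δ ^ j * (Δ - c l * (x * y)), x ^ (2 * j + 2)})
      (span {x, y} ^ (2 * j + 2)))
    (hJ' : ∀ l < 2 * j + 2, 1 ≤ l → IsReduction
      (span {Δ ^ (j + 1), x ^ (2 * j + 1) * (x - c l * y)}) (span {x, y} ^ (2 * j + 2))) {z : S}
    (hzJ : ∀ l < 2 * j + 2, z ∈ span {Δ ^ j * (Δ - c l * (x * y)), x ^ (2 * j + 2)})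
    (hzJ' : ∀ l < 2 * j + 2, 1 ≤ l → z ∈ span {Δ ^ (j + 1), x ^ (2 * j + 1) * (x - c l * y)})
    (hz : z ∈ span {x, y} ^ (4 * j + 2)) : z ∈ span {x, y} ^ (4 * j + 3) := by
  obtain ⟨D, hD, rfl⟩ := exists_formEval_eq_of_mem_pow 2 hΔ
  obtain ⟨p, hp, rfl⟩ := exists_formEval_eq_of_mem_pow _ hz
  have hn : 4 * j + 2 = 2 * j + (2 * j + 2) := by omega
  rw [hn] at hp hzJ hzJ'
  refine formEval_mem_pow_succ_of_map_eq_zero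
    (eq_zero_of_forall_eq_mul_add (D := D.map (Ideal.Quotient.mk _)) (i := j) (n := 2 * j + 2)
      (μ := fun l => Ideal.Quotient.mk _ (c l)) (by omega) ?_ (by rw [hc₀, map_zero])
      (fun k hk l hl hkl => ?_) (fun l hl => ?_) fun l hl hl₁ => ?_)
  · refine h.isCoprime_X_map_of_isReduction (j := j) hD ?_
    simpa only [hc₀, zero_mul, sub_zero, ← pow_succ] using hJ 0 (by omega)
  · rw [← map_sub]
    exact (hc k hk l hl hkl).map _
  · exact h.exists_map_eq_mul_add_X_pow_mul hD hp (hJ l hl) (hzJ l hl)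
  · exact h.exists_map_eq_pow_mul_add_mul hD hp (hJ' l hl hl₁) (hzJ' l hl hl₁)

theorem mem_pow_of_forall_isReduction (h : IsRegularPair x y) {j : ℕ} {Δ : S}
    (hΔ : Δ ∈ span {x, y} ^ 2) {c : ℕ → S} (hc₀ : c 0 = 0)
    (hc : ∀ k < 2 * j + 2, ∀ l < 2 * j + 2, k ≠ l → IsUnit (c k - c l))
    (hJ : ∀ l < 2 * j + 2, IsReduction (span {Δ ^ j * (Δ - c l * (x * y)), x ^ (2 * j + 2)})
      (span {x, y} ^ (2 * j + 2)))
    (hJ' : ∀ l < 2 * j + 2, 1 ≤ l → IsReduction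
      (span {Δ ^ (j + 1), x ^ (2 * j + 1) * (x - c l * y)}) (span {x, y} ^ (2 * j + 2))) {z : S}
    (hzJ : ∀ l < 2 * j + 2, z ∈ span {Δ ^ j * (Δ - c l * (x * y)), x ^ (2 * j + 2)})
    (hzJ' : ∀ l < 2 * j + 2, 1 ≤ l → z ∈ span {Δ ^ (j + 1), x ^ (2 * j + 1) * (x - c l * y)}) :
    z ∈ span {x, y} ^ (4 * j + 3) := by
  suffices ∀ s ≤ 4 * j + 3, z ∈ span {x, y} ^ s from this _ le_rfl
  intro s hs
  induction s with
  | zero => simp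
  | succ s ih =>
    refine h.mem_pow_of_pow_mul_mem_pow (4 * j + 2 - s) (s + 1) ?_
    rw [show s + 1 + (4 * j + 2 - s) = 4 * j + 3 by omega]
    refine h.mem_pow_succ_of_forall_isReduction hΔ hc₀ hc hJ hJ'
      (fun l hl => mul_mem_left _ _ (hzJ l hl))
      (fun l hl hl₁ => mul_mem_left _ _ (hzJ' l hl hl₁))
      (mul_mem_pow_of_le (pow_mem_pow (left_mem_span_pair x y) _) (ih (by omega)) (by omega))

end IsRegularPair

end LeadingForm

section RegularSequences

open RingTheory.Sequence Pointwise

/-- `HasRegularSequence R M n` says that some `M`-regular sequence in the maximal ideal has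
length `n`, in other words that the depth of `M` is at least `n`. -/
def HasRegularSequence (R : Type u) [CommRing R] [IsLocalRing R] (M : Type v) [AddCommGroup M]
    [Module R M] (n : ℕ) : Prop :=
  ∃ rs : List R, rs.length = n ∧ (∀ r ∈ rs, r ∈ maximalIdeal R) ∧ IsRegular M rs

theorem HasRegularSequence.congr {R : Type u} [CommRing R] [IsLocalRing R] {M N : Type*}
    [AddCommGroup M] [Module R M] [AddCommGroup N] [Module R N] {n : ℕ}
    (h : HasRegularSequence R M n) (e : M ≃ₗ[R] N) : HasRegularSequence R N n := by
  obtain ⟨rs, hlen, hrs, hreg⟩ := h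
  exact ⟨rs, hlen, hrs, (e.isRegular_congr rs).1 hreg⟩

theorem ringKrullDim_quotient_le_supportDim_quotSMulTop {R : Type u} [CommRing R] {M : Type v}
    [AddCommGroup M] [Module R M] [Module.Finite R M] {P : Ideal R} (hP : P ∈ associatedPrimes R M)
    {x : R} (hx : x ∈ P) :
    ringKrullDim (R ⧸ P) ≤ Module.supportDim R (QuotSMulTop x M) := by
  have hmem : (⟨P, hP.isPrime⟩ : PrimeSpectrum R) ∈ Module.support R (QuotSMulTop x M) := by
    rw [Module.support_quotSMulTop, Module.support_eq_zeroLocus]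
    exact ⟨Submodule.annihilator_top (R := R) (M := M) ▸ hP.annihilator_le, by simpa using hx⟩
  rw [Module.support_eq_zeroLocus] at hmem
  rw [Module.supportDim_eq_ringKrullDim_quotient_annihilator]
  exact ringKrullDim_le_of_surjective (Ideal.Quotient.factor hmem)
    (Ideal.Quotient.factor_surjective hmem)

variable {R : Type u} [CommRing R] [IsNoetherianRing R] [IsLocalRing R]

theorem IsCMLocalRing.exists_hasRegularSequence (hCM : IsCMLocalRing R) :
    ∃ d : ℕ, ringKrullDim R = d ∧ HasRegularSequence R R d := by
  have hdim : ringKrullDim R = (mDepth R (R ⧸ (⊥ : Ideal R)) : WithBot ℕ∞) := hCM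
  have hlt : mDepth R (R ⧸ (⊥ : Ideal R)) < ⊤ :=
    WithBot.coe_lt_coe.1 (hdim ▸ ringKrullDim_lt_top)
  have : Nontrivial (R ⧸ (⊥ : Ideal R)) := Ideal.Quotient.nontrivial_iff.2 bot_ne_top
  have hne : Nonempty {n : ℕ∞ | ∃ rs : List R, (∀ x ∈ rs, x ∈ maximalIdeal R) ∧
      IsRegular (R ⧸ (⊥ : Ideal R)) rs ∧ (rs.length : ℕ∞) = n} :=
    ⟨0, [], by simp, IsRegular.nil _ _, rfl⟩
  obtain ⟨rs, hrs, hreg, hlen⟩ := ENat.sSup_mem_of_nonempty_of_lt_top hlt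
  refine ⟨rs.length, ?_, rs, rfl, hrs, ?_⟩
  · rw [hdim, mDepth, ← hlen, WithBot.coe_natCast]
  · exact ((Submodule.quotEquivOfEqBot (⊥ : Ideal R) rfl).isRegular_congr rs).1 hreg

section Module

variable {M : Type v} [AddCommGroup M] [Module R M] [Module.Finite R M]

theorem exists_mem_associatedPrimes_quotSMulTop {P : Ideal R} (hP : P ∈ associatedPrimes R M)
    {x : R} (hx : x ∈ maximalIdeal R) (hreg : IsSMulRegular M x) :
    ∃ Q ∈ associatedPrimes R (QuotSMulTop x M), P ≤ Q ∧ x ∈ Q := by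
  obtain ⟨hprime, u, hPu⟩ := isAssociatedPrime_iff.1 hP
  have hmem (p : R) : p ∈ P ↔ p • u = 0 := by rw [hPu, Submodule.mem_colon_singleton]; rfl
  set N : Submodule R M := Submodule.torsionBySet R M P
  have huN : u ∈ N := (Submodule.mem_torsionBySet_iff _ _).2 fun p => (hmem p).1 p.2
  have hu : u ≠ 0 := fun h =>
    hprime.ne_top ((Ideal.eq_top_iff_one _).2 ((hmem 1).2 (by rw [h, smul_zero])))
  have hnot : ¬ N ≤ x • (⊤ : Submodule R M) := by
    intro hle
    have hN : N ≤ maximalIdeal R • N := by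
      intro n hn
      obtain ⟨t, -, rfl⟩ := Submodule.mem_smul_pointwise_iff_exists _ _ _ |>.1 (hle hn)
      refine Submodule.smul_mem_smul hx ((Submodule.mem_torsionBySet_iff _ _).2 fun p => hreg ?_)
      simpa [smul_comm x] using (Submodule.mem_torsionBySet_iff _ _).1 hn p
    have hbot := Submodule.eq_bot_of_le_smul_of_le_jacobson_bot _ N (IsNoetherian.noetherian N) hN
      (IsLocalRing.jacobson_eq_maximalIdeal ⊥ bot_ne_top).ge
    exact hu ((Submodule.mem_bot R).1 (hbot ▸ huN))
  obtain ⟨w, hwN, hw⟩ := SetLike.not_le_iff_exists.1 hnot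
  obtain ⟨Q, hQ, hle⟩ := exists_le_isAssociatedPrime_of_isNoetherianRing R
    (Submodule.Quotient.mk w : QuotSMulTop x M)
    (mt (Submodule.Quotient.mk_eq_zero _).1 hw)
  refine ⟨Q, hQ, fun p hp => hle ?_, hle ?_⟩ <;>
    rw [Submodule.mem_colon_singleton, Submodule.mem_bot, ← Submodule.Quotient.mk_smul,
      Submodule.Quotient.mk_eq_zero]
  · rw [(Submodule.mem_torsionBySet_iff _ _).1 hwN ⟨p, hp⟩]
    exact zero_mem _
  · exact Submodule.smul_mem_pointwise_smul _ _ _ Submodule.mem_top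

theorem HasRegularSequence.le_ringKrullDim_quotient {n : ℕ} (h : HasRegularSequence R M n)
    {P : Ideal R} (hP : P ∈ associatedPrimes R M) : (n : WithBot ℕ∞) ≤ ringKrullDim (R ⧸ P) := by
  obtain ⟨rs, rfl, hrs, hreg⟩ := h
  replace hreg := hreg.toIsWeaklyRegular
  induction rs generalizing M P with
  | nil =>
    have := hP.isPrime
    exact_mod_cast ringKrullDim_nonneg_of_nontrivial
  | cons x rs ih =>
    simp only [List.mem_cons, forall_eq_or_imp, isWeaklyRegular_cons_iff] at hrs hreg
    obtain ⟨Q, hQ, hPQ, hxQ⟩ := exists_mem_associatedPrimes_quotSMulTop hP hrs.1 hreg.1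
    have := hP.isPrime
    have hxP : x ∉ P := fun hxP => (biUnion_associatedPrimes_eq_compl_regular R M).subset
      (Set.mem_biUnion hP hxP) hreg.1
    have hdim := ringKrullDim_succ_le_of_surjective (Ideal.Quotient.factor hPQ)
      (Ideal.Quotient.factor_surjective hPQ) (r := Ideal.Quotient.mk P x)
      (mem_nonZeroDivisors_of_ne_zero (by rwa [Ne, Ideal.Quotient.eq_zero_iff_mem]))
      (by rwa [Ideal.Quotient.factor_mk, Ideal.Quotient.eq_zero_iff_mem])
    calc ((rs.length + 1 : ℕ) : WithBot ℕ∞) = rs.length + 1 := by push_cast; rfl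
      _ ≤ ringKrullDim (R ⧸ Q) + 1 := by gcongr; exact ih hQ hrs.2 hreg.2
      _ ≤ ringKrullDim (R ⧸ P) := hdim

theorem HasRegularSequence.isSMulRegular_of_supportDim_le {n : ℕ}
    (h : HasRegularSequence R M (n + 1)) {x : R}
    (hx : Module.supportDim R (QuotSMulTop x M) ≤ n) : IsSMulRegular M x := by
  by_contra hreg
  obtain ⟨P, hP, hxP⟩ := Set.mem_iUnion₂.1
    ((biUnion_associatedPrimes_eq_compl_regular R M).superset hreg)
  have hle : ((n + 1 : ℕ) : WithBot ℕ∞) ≤ n :=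
    (h.le_ringKrullDim_quotient hP).trans
      ((ringKrullDim_quotient_le_supportDim_quotSMulTop hP hxP).trans hx)
  norm_cast at hle
  omega

end Module

section Exchange

open CategoryTheory Abelian

variable {M : Type u} [AddCommGroup M] [Module R M] [Module.Finite R M]

theorem HasRegularSequence.quotSMulTop {n : ℕ} (h : HasRegularSequence R M (n + 1)) {x : R}
    (hx : x ∈ maximalIdeal R) (hreg : IsSMulRegular M x) :
    HasRegularSequence R (QuotSMulTop x M) n := by
  have hM : Nontrivial M := by
    obtain ⟨_, -, -, hrs⟩ := h
    exact hrs.nontrivial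
  have hlt (N : Type u) [AddCommGroup N] [Module R N] [Module.Finite R N] [Nontrivial N] :
      maximalIdeal R • (⊤ : Submodule R N) < ⊤ :=
    (Submodule.top_ne_ideal_smul_of_le_jacobson_annihilator
      (maximalIdeal_le_jacobson _)).symm.lt_top
  have hQ : Nontrivial (QuotSMulTop x M) := nontrivial_quotSMulTop_of_mem_maximalIdeal M hx
  refine ((ModuleCat.exists_isRegular_tfae (maximalIdeal R) n
    (ModuleCat.of R (QuotSMulTop x M)) (hlt _)).out 0 3).1 fun N _ _ hN i hi => ?_
  have hext : ∀ i < n + 1, Subsingleton (Ext N (ModuleCat.of R M) i) :=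
    (((ModuleCat.exists_isRegular_tfae (maximalIdeal R) (n + 1)
      (ModuleCat.of R M) (hlt _)).out 0 3).2 h :) N ‹_› ‹_› hN
  have hzero := AddCommGrpCat.isZero_of_iff_subsingleton.mpr (hext i (by omega))
  have hzero' := AddCommGrpCat.isZero_of_iff_subsingleton.mpr (hext (i + 1) (by omega))
  exact AddCommGrpCat.subsingleton_of_isZero <| ShortComplex.Exact.isZero_of_both_zeros
    (Ext.covariant_sequence_exact₃' N
      (IsSMulRegular.smulShortComplex_shortExact (M := ModuleCat.of R M) hreg) i (i + 1) rfl)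
    (hzero.eq_zero_of_src _) (hzero'.eq_zero_of_tgt _)

theorem supportDim_le_supportDim_quotient_ofList_add_length {fs : List R}
    (hfs : ∀ f ∈ fs, f ∈ maximalIdeal R) : Module.supportDim R M ≤
      Module.supportDim R (M ⧸ (Ideal.ofList fs • ⊤ : Submodule R M)) + fs.length := by
  induction fs generalizing M with
  | nil =>
    have e := Submodule.quotEquivOfEqBot (Ideal.ofList ([] : List R) • ⊤ : Submodule R M)
      (by rw [Ideal.ofList_nil, Submodule.bot_smul])
    simp [Module.supportDim_eq_of_equiv e]
  | cons f fs ih =>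
    simp only [List.mem_cons, forall_eq_or_imp] at hfs
    rw [Module.supportDim_eq_of_equiv (Submodule.quotOfListConsSMulTopEquivQuotSMulTopInner M f fs)]
    calc Module.supportDim R M ≤ Module.supportDim R (QuotSMulTop f M) + 1 :=
          Module.supportDim_le_supportDim_quotSMulTop_succ hfs.1
      _ ≤ _ + (fs.length : WithBot ℕ∞) + 1 := by gcongr; exact ih hfs.2
      _ = _ := by push_cast [List.length_cons]; rw [add_assoc]

theorem HasRegularSequence.isWeaklyRegular_of_supportDim_le {n : ℕ} {fs : List R}
    (h : HasRegularSequence R M (n + fs.length)) (hfs : ∀ f ∈ fs, f ∈ maximalIdeal R)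
    (hdim : Module.supportDim R (M ⧸ (Ideal.ofList fs • ⊤ : Submodule R M)) ≤ n) :
    IsWeaklyRegular M fs ∧ HasRegularSequence R (M ⧸ (Ideal.ofList fs • ⊤ : Submodule R M)) n := by
  induction fs generalizing M with
  | nil =>
    exact ⟨.nil _ _, h.congr (Submodule.quotEquivOfEqBot _ (by simp)).symm⟩
  | cons f fs ih =>
    simp only [List.mem_cons, forall_eq_or_imp] at hfs
    have e := Submodule.quotOfListConsSMulTopEquivQuotSMulTopInner M f fs
    rw [Module.supportDim_eq_of_equiv e] at hdim
    have hf : IsSMulRegular M f := h.isSMulRegular_of_supportDim_le <|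
      calc Module.supportDim R (QuotSMulTop f M) ≤ _ + (fs.length : WithBot ℕ∞) :=
            supportDim_le_supportDim_quotient_ofList_add_length hfs.2
        _ ≤ ((n + fs.length : ℕ) : WithBot ℕ∞) := by push_cast; gcongr
    obtain ⟨hreg, hquot⟩ := ih (h.quotSMulTop hfs.1 hf) hfs.2 hdim
    exact ⟨.cons hf hreg, hquot.congr e.symm⟩

end Exchange

theorem height_add_coheight_le_ringKrullDim {R : Type u} [CommRing R] (P : PrimeSpectrum R) :
    ((P.asIdeal.height + Order.coheight P : ℕ∞) : WithBot ℕ∞) ≤ ringKrullDim R := by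
  have : Nonempty (PrimeSpectrum R) := ⟨P⟩
  rw [ringKrullDim, Order.krullDim_eq_iSup_height_add_coheight_of_nonempty,
    PrimeSpectrum.height_eq_orderHeight]
  exact WithBot.coe_le_coe.2
    (le_iSup (fun Q : PrimeSpectrum R => Order.height Q + Order.coheight Q) P)

theorem ringKrullDim_quotient_add_height_le {R : Type u} [CommRing R] (P : Ideal R) [P.IsPrime] :
    ringKrullDim (R ⧸ P) + P.height ≤ ringKrullDim R := by
  have hcoheight : ringKrullDim (R ⧸ P) = Order.coheight (⟨P, ‹_›⟩ : PrimeSpectrum R) := by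
    rw [ringKrullDim_quotient, Order.coheight_eq_krullDim_Ici]
    rfl
  rw [hcoheight, add_comm]
  exact_mod_cast height_add_coheight_le_ringKrullDim ⟨P, ‹_›⟩

theorem ringKrullDim_quotient_le_of_le_height {R : Type u} [CommRing R] {n h : ℕ}
    (hdim : ringKrullDim R ≤ (n + h : ℕ)) {K : Ideal R}
    (hK : ∀ P : Ideal R, P.IsPrime → K ≤ P → (h : ℕ∞) ≤ P.height) :
    ringKrullDim (R ⧸ K) ≤ n := by
  rw [ringKrullDim_quotient, Order.krullDim]
  refine iSup_le fun p => ?_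
  let q : LTSeries (PrimeSpectrum R) := p.map Subtype.val fun _ _ h => h
  have hcoheight : (p.length : ℕ∞) ≤ Order.coheight q.head := Order.length_le_coheight_head (p := q)
  have hheight := hK q.head.asIdeal q.head.2 p.head.2
  have hle : (h : ℕ∞) + p.length ≤ (n + h : ℕ) := by
    refine (add_le_add hheight hcoheight).trans (WithBot.coe_le_coe.1 ?_)
    exact_mod_cast (height_add_coheight_le_ringKrullDim q.head).trans hdim
  norm_cast at hle ⊢
  omega

theorem IsCMLocalRing.isWeaklyRegular_and_unmixed (hCM : IsCMLocalRing R) {fs : List R}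
    (hfs : ∀ f ∈ fs, f ∈ maximalIdeal R)
    (hheight : ∀ P : Ideal R, P.IsPrime → Ideal.ofList fs ≤ P → (fs.length : ℕ∞) ≤ P.height) :
    IsWeaklyRegular R fs ∧
      ∀ P ∈ associatedPrimes R (R ⧸ Ideal.ofList fs), P.height ≤ fs.length := by
  obtain ⟨d, hd, hreg⟩ := hCM.exists_hasRegularSequence
  have hle : fs.length ≤ d := by
    have hmax := hheight (maximalIdeal R) inferInstance (Ideal.span_le.2 hfs)
    have hdim := Ideal.height_le_ringKrullDim_of_ne_top (I := maximalIdeal R) Ideal.IsPrime.ne_top'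
    rw [hd] at hdim
    exact_mod_cast (WithBot.coe_le_coe.2 hmax).trans hdim
  obtain ⟨n, rfl⟩ := Nat.exists_eq_add_of_le' hle
  have hdim : ringKrullDim (R ⧸ Ideal.ofList fs) ≤ n :=
    ringKrullDim_quotient_le_of_le_height hd.le hheight
  obtain ⟨hweak, hquot⟩ := hreg.isWeaklyRegular_of_supportDim_le hfs (n := n) <| by
    rwa [Module.supportDim_quotient_eq_ringKrullDim, smul_eq_mul, Ideal.mul_top]
  refine ⟨hweak, fun P hP => ?_⟩
  have := hP.isPrime
  have hP' := hquot.le_ringKrullDim_quotient (P := P) (by rwa [smul_eq_mul, Ideal.mul_top])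
  have hsum := (add_le_add_left hP' (P.height : WithBot ℕ∞)).trans
    (ringKrullDim_quotient_add_height_le P)
  rw [hd] at hsum
  exact (ENat.add_le_add_iff_left (ENat.natCast_ne_top n)).1 (by exact_mod_cast hsum)

end RegularSequences

section Reductions

open Ideal

variable {R : Type u} [CommRing R] {H J : Ideal R}

theorem isReduction_of_pow_succ_le (hJ : J ≤ H) {r : ℕ} (hr : H ^ (r + 1) ≤ J * H ^ r) :
    IsReduction J H :=
  ⟨hJ, r, le_antisymm hr (by rw [pow_succ']; exact mul_mono_left hJ)⟩

theorem IsReduction.mono {J' : Ideal R} (hJ : IsReduction J H) (hle : J ≤ J') (hJ' : J' ≤ H) :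
    IsReduction J' H := by
  obtain ⟨-, r, hr⟩ := hJ
  exact isReduction_of_pow_succ_le hJ' (hr.le.trans (mul_mono_left hle))

theorem IsReduction.exists_forall_pow_succ_le (hJ : IsReduction J H) :
    ∃ r, ∀ s, r ≤ s → H ^ (s + 1) ≤ J * H ^ s := by
  obtain ⟨-, r, hr⟩ := hJ
  refine ⟨r, fun s hs => ?_⟩
  obtain ⟨t, rfl⟩ := Nat.exists_eq_add_of_le hs
  rw [add_right_comm, pow_add, hr, mul_assoc, ← pow_add]

theorem pow_add_eq_pow_mul_pow {r : ℕ} (hr : H ^ (r + 1) = J * H ^ r) (s : ℕ) :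
    H ^ (r + s) = J ^ s * H ^ r := by
  induction s with
  | zero => simp
  | succ s ih => rw [← add_assoc, pow_succ, ih, mul_assoc, ← pow_succ, hr, ← mul_assoc, ← pow_succ]

theorem span_pair_sub_sup_span_singleton (f g h x y : R) :
    span {f - x * h, g - y * h} ⊔ span {h} = span {f, g} ⊔ span {h} := by
  have hsub (f x : R) : span {f - x * h} ⊔ span {h} = span {f} ⊔ span {h} := by
    rw [← span_insert, ← span_insert, sub_eq_add_neg, neg_mul_eq_neg_mul, span_pair_add_mul_right]
  rw [span_insert, span_insert, sup_sup_distrib_right, hsub, hsub, ← sup_sup_distrib_right]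

theorem IsReduction.span_pair_sub_sup {a b h : R}
    (hab : IsReduction (span {a, b}) H) (hh : h ∈ H) (c : R) :
    IsReduction (span {a, b - c * h} ⊔ span {h}) H := by
  have hsup := span_pair_sub_sup_span_singleton a b h 0 c
  rw [zero_mul, sub_zero] at hsup
  rw [hsup]
  exact hab.mono le_sup_left (sup_le hab.1 ((span_singleton_le_iff_mem _).2 hh))

theorem le_of_le_sup_maximalIdeal_mul [IsNoetherianRing R] [IsLocalRing R] {A B : Ideal R}
    (h : A ≤ B ⊔ maximalIdeal R * A) : A ≤ B :=
  Submodule.le_of_le_smul_of_le_jacobson_bot (IsNoetherian.noetherian A)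
    (by rw [jacobson_eq_maximalIdeal _ bot_ne_top]) h

theorem exists_span_pair_eq_of_notMem [IsLocalRing R] {f g e : R} (he : e ∈ span {f, g})
    (hne : e ∉ maximalIdeal R * span {f, g}) : ∃ g', span {e, g'} = span {f, g} := by
  obtain ⟨a, b, rfl⟩ := mem_span_pair.1 he
  wlog ha : IsUnit a generalizing a b f g
  · have hb : IsUnit b := by
      by_contra hb
      exact hne (add_mem (mul_mem_mul ha (left_mem_span_pair f g))
        (mul_mem_mul hb (right_mem_span_pair f g)))
    rw [Set.pair_comm, add_comm] at he hne
    simpa only [Set.pair_comm f, add_comm (a * f)] using this b a he hne hb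
  obtain ⟨u, rfl⟩ := ha
  have hf : f = ↑u⁻¹ * (u * f + b * g) + (-(↑u⁻¹ * b)) * g := by
    linear_combination (-f) * u.inv_mul
  refine ⟨g, le_antisymm (span_le.2 ?_) (span_le.2 ?_)⟩
  · rintro w (rfl | rfl)
    exacts [he, right_mem_span_pair _ _]
  · rintro w (rfl | rfl)
    exacts [mem_span_pair.2 ⟨_, _, hf.symm⟩, right_mem_span_pair _ _]

theorem exists_le_span_singleton_sup_of_lt_span_pair [IsLocalRing R] {f g : R}
    (hJ : J < span {f, g}) :
    ∃ e ∈ span {f, g}, J ≤ span {e} ⊔ maximalIdeal R * span {f, g} := by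
  by_cases hle : J ≤ maximalIdeal R * span {f, g}
  · exact ⟨0, zero_mem _, hle.trans le_sup_right⟩
  obtain ⟨e, heJ, he⟩ := SetLike.not_le_iff_exists.1 hle
  obtain ⟨g', hg'⟩ := exists_span_pair_eq_of_notMem (hJ.le heJ) he
  refine ⟨e, hJ.le heJ, fun z hz => ?_⟩
  rw [← hg'] at hJ ⊢
  obtain ⟨c, d, rfl⟩ := mem_span_pair.1 (hJ.le hz)
  have hd : d ∈ maximalIdeal R := fun hd => hJ.not_ge <| span_le.2 <| by
    have hg'J : g' ∈ J := (unit_mul_mem_iff_mem J hd).1 <|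
      (Submodule.add_mem_iff_right J (J.mul_mem_left c heJ)).1 hz
    rintro w (rfl | rfl)
    exacts [heJ, hg'J]
  exact Submodule.add_mem_sup (mul_mem_left _ _ (mem_span_singleton_self e))
    (mul_mem_mul hd (right_mem_span_pair e g'))

theorem IsReduction.isMinimalReduction_of_two_le_height [IsNoetherianRing R] [IsLocalRing R]
    (hH : H ≤ maximalIdeal R) (hheight : ∀ P : Ideal R, P.IsPrime → H ≤ P → 2 ≤ P.height)
    {f g : R} (hJ : IsReduction (span {f, g}) H) : IsMinimalReduction (span {f, g}) H := by
  refine ⟨hJ, fun J' ⟨_, r, hr⟩ hle => by_contra fun hne => ?_⟩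
  obtain ⟨e, he, hJ'e⟩ := exists_le_span_singleton_sup_of_lt_span_pair (hle.lt_of_ne hne)
  have hpow : H ^ (r + 1) ≤ span {e} := by
    apply le_of_le_sup_maximalIdeal_mul
    nth_rewrite 1 [hr]
    refine (mul_mono_left hJ'e).trans ?_
    rw [Ideal.sup_mul, mul_assoc, pow_succ' H]
    exact sup_le_sup mul_le_left (mul_mono_right (mul_mono_left hJ.1))
  obtain ⟨P, hP, -⟩ := exists_minimalPrimes_le
    ((span_singleton_le_iff_mem (maximalIdeal R)).2 (hH (hJ.1 he)))
  have hPprime := hP.1.1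
  have hle_one := height_le_one_of_isPrincipal_of_mem_minimalPrimes _ P hP
  have htwo_le := hheight P hPprime (hPprime.le_of_pow_le (hpow.trans hP.1.2))
  exact absurd (htwo_le.trans hle_one) (by norm_num)

theorem sup_span_singleton_pow_le {h : R} (hJ : J ≤ H) (hh : h ∈ H) (D : ℕ) :
    (J ⊔ span {h}) ^ (D + 1) ≤ J * H ^ D ⊔ span {h ^ (D + 1)} := by
  induction D with
  | zero => simp
  | succ D ih =>
    have hle : J ⊔ span {h} ≤ H := sup_le hJ ((span_singleton_le_iff_mem _).2 hh)
    rw [pow_succ]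
    refine (mul_mono_left ih).trans ?_
    rw [Ideal.sup_mul, Ideal.mul_sup (span _), span_singleton_mul_span_singleton, ← pow_succ,
      ← sup_assoc]
    refine sup_le_sup_right (sup_le ?_ ?_) _
    · rw [mul_assoc, pow_succ]
      exact mul_mono_right (mul_mono_right hle)
    · rw [mul_comm]
      exact mul_mono_right ((span_singleton_le_iff_mem _).2 (pow_mem_pow hh _))

theorem IsReduction.of_sup_span_singleton [IsNoetherianRing R] [IsLocalRing R] {h : R} {D : ℕ}
    (hred : IsReduction (J ⊔ span {h}) H)
    (hpow : h ^ (D + 1) ∈ J * H ^ D ⊔ maximalIdeal R * H ^ (D + 1)) : IsReduction J H := by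
  obtain ⟨hle, r, hr⟩ := hred
  have hJ : J ≤ H := le_sup_left.trans hle
  have hh : h ∈ H := hle (mem_sup_right (mem_span_singleton_self h))
  have hsup : (J ⊔ span {h}) ^ (D + 1) ≤ J * H ^ D ⊔ maximalIdeal R * H ^ (D + 1) :=
    (sup_span_singleton_pow_le hJ hh D).trans
      (sup_le le_sup_left ((span_singleton_le_iff_mem _).2 hpow))
  refine isReduction_of_pow_succ_le hJ (r := D + r) (le_of_le_sup_maximalIdeal_mul ?_)
  calc H ^ (D + r + 1) = (J ⊔ span {h}) ^ (D + 1) * H ^ r := by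
        rw [← pow_add_eq_pow_mul_pow hr]; congr 1; omega
    _ ≤ (J * H ^ D ⊔ maximalIdeal R * H ^ (D + 1)) * H ^ r := mul_mono_left hsup
    _ = J * H ^ (D + r) ⊔ maximalIdeal R * H ^ (D + r + 1) := by
        rw [Ideal.sup_mul, mul_assoc, mul_assoc, ← pow_add, ← pow_add, add_right_comm]

theorem IsReduction.of_sum_mem [IsNoetherianRing R] [IsLocalRing R] {ι : Type*} [Fintype ι]
    {h : R} {D : ℕ} (hred : IsReduction (J ⊔ span {h}) H) (c w t : ι → R)
    (hw : ∀ i, w i - t i * h ^ (D + 1) ∈ J * H ^ D) (ht : IsUnit (∑ i, c i * t i))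
    (hsum : ∑ i, c i * w i ∈ J * H ^ D ⊔ maximalIdeal R * H ^ (D + 1)) : IsReduction J H := by
  refine hred.of_sup_span_singleton (D := D) ((unit_mul_mem_iff_mem _ ht).1 ?_)
  have hdiff : ∑ i, c i * (w i - t i * h ^ (D + 1)) ∈ J * H ^ D :=
    sum_mem fun i _ => mul_mem_left _ _ (hw i)
  convert sub_mem hsum (mem_sup_left hdiff) using 1
  rw [← Finset.sum_sub_distrib, Finset.sum_mul]
  exact Finset.sum_congr rfl fun i _ => by ring

theorem pow_mul_sub_mem_mul_pow {f h l w : R} {q : ℕ} (hf : f ∈ H) (hh : h ∈ H)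
    (hfl : f - l * h ∈ J) (hw : w ∈ H ^ q) (a : ℕ) :
    f ^ a * w - l ^ a * (h ^ a * w) ∈ J * H ^ (a + q - 1) := by
  induction a generalizing q w with
  | zero => simp
  | succ a ih =>
    have hfw : f ^ a * (f * w) - l ^ a * (h ^ a * (f * w)) ∈ J * H ^ (a + (q + 1) - 1) :=
      ih (by rw [pow_succ']; exact mul_mem_mul hf hw)
    have hdiff : (f - l * h) * (l ^ a * (h ^ a * w)) ∈ J * H ^ (a + q) :=
      mul_mem_mul hfl (mul_mem_left _ _ (mul_mem_pow_of_le (pow_mem_pow hh a) hw le_rfl))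
    rw [show a + (q + 1) - 1 = a + q by omega] at hfw
    rw [show a + 1 + q - 1 = a + q by omega]
    convert add_mem hfw hdiff using 1
    ring

theorem pow_mul_pow_mul_pow_sub_mem_mul_pow {f g h x y : R} (hf : f ∈ H) (hg : g ∈ H) (hh : h ∈ H)
    (hfx : f - x * h ∈ J) (hgy : g - y * h ∈ J) {a b c D : ℕ} (hD : a + b + c = D + 1) :
    f ^ a * (g ^ b * h ^ c) - x ^ a * y ^ b * h ^ (D + 1) ∈ J * H ^ D := by
  have hf' := pow_mul_sub_mem_mul_pow hf hh hfx (a := a) (q := b + c)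
    (mul_mem_pow_of_le (pow_mem_pow hg b) (pow_mem_pow hh c) le_rfl)
  have hg' := pow_mul_sub_mem_mul_pow hg hh hgy (a := b) (q := a + c)
    (mul_mem_pow_of_le (pow_mem_pow hh a) (pow_mem_pow hh c) le_rfl)
  rw [show a + (b + c) - 1 = D by omega] at hf'
  rw [show b + (a + c) - 1 = D by omega] at hg'
  convert add_mem hf' (mul_mem_left _ (x ^ a) hg') using 1
  rw [← hD]
  ring

theorem exists_sum_mul_mem_maximalIdeal_mul_span [IsLocalRing R] {ι : Type*} [Fintype ι]
    (s : Finset R) (hs : s.card < Fintype.card ι) (w : ι → R) (hw : ∀ i, w i ∈ span (s : Set R)) :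
    ∃ c : ι → R, (∃ i, IsUnit (c i)) ∧ ∑ i, c i * w i ∈ maximalIdeal R * span (s : Set R) := by
  have hA : ∀ i, ∃ A : s → R, ∑ j, A j * j = w i := fun i => by
    rw [← mem_span_range_iff_exists_fun, Subtype.range_coe]
    exact hw i
  choose A hA using hA
  have hdep : ¬ LinearIndependent (ResidueField R) fun i (j : s) => residue R (A i j) := fun h => by
    have := h.fintype_card_le_finrank
    rw [Module.finrank_fintype_fun_eq_card, Fintype.card_coe] at this
    omega
  obtain ⟨g, hg, i, hi⟩ := Fintype.not_linearIndependent_iff.1 hdep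
  choose c hc using fun i => residue_surjective (g i)
  refine ⟨c, ⟨i, (residue_ne_zero_iff_isUnit _).1 (hc i ▸ hi)⟩, ?_⟩
  have hsum : ∑ i, c i * w i = ∑ j : s, (∑ i, c i * A i j) * j := by
    simp_rw [← hA, Finset.mul_sum, Finset.sum_mul, mul_assoc]
    exact Finset.sum_comm
  rw [hsum]
  refine sum_mem fun j _ => mul_mem_mul ((residue_eq_zero_iff _).1 ?_) (subset_span j.2)
  simpa [hc, map_sum] using congrFun hg j

theorem exists_finset_span_eq_span_pair_pow_mul (p q : R) (k : ℕ) (s : Finset R) :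
    ∃ t : Finset R, t.card ≤ (k + 1) * s.card ∧
      span (t : Set R) = span {p, q} ^ k * span (s : Set R) := by
  classical
  let monomials := (Finset.range (k + 1)).image fun i => p ^ i * q ^ (k - i)
  have hspan : span (monomials : Set R) = span {p, q} ^ k := by
    refine le_antisymm (span_le.2 fun z hz => ?_) fun z hz => ?_
    · obtain ⟨i, -, rfl⟩ := Finset.mem_image.1 hz
      refine mul_mem_pow_of_le (pow_mem_pow (left_mem_span_pair p q) i)
        (pow_mem_pow (right_mem_span_pair p q) _) ?_
      omega
    · obtain ⟨P, -, rfl⟩ := exists_formEval_eq_of_mem_pow k hz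
      rw [formEval_eq_sum]
      exact sum_mem fun i hi => mul_mem_left _ _ (subset_span <| Finset.mem_image_of_mem _ hi)
  refine ⟨Finset.image₂ (· * ·) monomials s, ?_, ?_⟩
  · refine (Finset.card_image₂_le _ _ _).trans (Nat.mul_le_mul_right _ ?_)
    exact Finset.card_image_le.trans (Finset.card_range _).le
  · rw [Finset.coe_image₂, ← hspan, span_mul_span']
    rfl

theorem pow_add_le_span_pow_mul_sup_mul {a : R} {m n : ℕ} (ha : a ∈ H)
    (h : H ^ (n + 1) ≤ span {a} * H ^ n ⊔ J * H ^ m) (s : ℕ) :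
    H ^ (n + 1 + s) ≤ span {a ^ (s + 1)} * H ^ n ⊔ J * H ^ (m + s) := by
  induction s with
  | zero => simpa using h
  | succ s ih =>
    have hstep : span {a ^ (s + 1)} * H ^ (n + 1) ≤
        span {a ^ (s + 2)} * H ^ n ⊔ J * H ^ (m + (s + 1)) := by
      refine (mul_mono_right h).trans ?_
      rw [Ideal.mul_sup, ← mul_assoc, span_singleton_mul_span_singleton, ← pow_succ, mul_left_comm,
        add_comm m, pow_add H]
      exact sup_le_sup_left (mul_mono_right <| mul_mono_left <|
        (span_singleton_le_iff_mem _).2 (pow_mem_pow ha _)) _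
    rw [← add_assoc, pow_succ]
    refine (mul_mono_left ih).trans ?_
    rw [Ideal.sup_mul, mul_assoc, mul_assoc, ← pow_succ, ← pow_succ]
    exact sup_le hstep le_sup_right

theorem pow_add_succ_le_span_mul_sup {a b : R} (hle : span {a, b} ≤ H) {r : ℕ}
    (hr : H ^ (r + 1) = span {a, b} * H ^ r) (s : ℕ) :
    H ^ (r + s + 1) ≤ span {a} * H ^ (r + s) ⊔ span {b ^ (s + 1)} * H ^ r := by
  rw [add_assoc, pow_add_eq_pow_mul_pow hr, add_comm r, pow_add H]
  refine (mul_mono_left (span_pair_pow_succ_le a b s)).trans ?_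
  rw [Ideal.sup_mul, mul_assoc]
  exact sup_le_sup_right (mul_mono_right (mul_mono_left (pow_right_mono hle _))) _

theorem pow_add_le_span_mul_sup_span_pow_mul {a b c : R} {r : ℕ} (hb : b ∈ H)
    (hab : H ^ (r + 1) ≤ span {b} * H ^ r ⊔ span {a} * H ^ r)
    (hac : H ^ (r + 1) ≤ span {a} * H ^ r ⊔ span {c} * H ^ r) (j : ℕ) :
    H ^ (r + j + 1) ≤ span {a} * H ^ (r + j) ⊔ span {b ^ j * c} * H ^ r := by
  rw [add_right_comm]
  refine (pow_add_le_span_pow_mul_sup_mul hb hab j).trans (sup_le ?_ le_sup_left)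
  calc span {b ^ (j + 1)} * H ^ r = span {b ^ j} * (span {b} * H ^ r) := by
        rw [← mul_assoc, span_singleton_mul_span_singleton, ← pow_succ]
    _ ≤ span {b ^ j} * (span {a} * H ^ r ⊔ span {c} * H ^ r) := by
        refine mul_mono_right (le_trans ?_ hac)
        rw [pow_succ']
        exact mul_mono_left ((span_singleton_le_iff_mem _).2 hb)
    _ = span {a} * (span {b ^ j} * H ^ r) ⊔ span {b ^ j * c} * H ^ r := by
        rw [Ideal.mul_sup, mul_left_comm, ← mul_assoc (span {b ^ j}) (span {c}),
          span_singleton_mul_span_singleton]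
    _ ≤ span {a} * H ^ (r + j) ⊔ span {b ^ j * c} * H ^ r := by
        refine sup_le_sup_right (mul_mono_right ?_) _
        rw [add_comm r, pow_add]
        exact mul_mono_left ((span_singleton_le_iff_mem _).2 (pow_mem_pow hb j))

theorem IsReduction.span_pair_pow_mul {a b c : R} (hab : IsReduction (span {a, b}) H)
    (hac : IsReduction (span {a, c}) H) (j : ℕ) :
    IsReduction (span {a ^ (j + 1), b ^ j * c}) (H ^ (j + 1)) := by
  have ha : a ∈ H := hab.1 (left_mem_span_pair a b)
  have hb : b ∈ H := hab.1 (right_mem_span_pair a b)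
  have hc : c ∈ H := hac.1 (right_mem_span_pair a c)
  obtain ⟨r, hr⟩ := hab.exists_forall_pow_succ_le
  obtain ⟨s, hs⟩ := hac.exists_forall_pow_succ_le
  have hb_step : H ^ (r + s + 1) ≤ span {b} * H ^ (r + s) ⊔ span {a} * H ^ (r + s) := by
    rw [← Ideal.sup_mul, sup_comm, ← span_insert]
    exact hr _ (Nat.le_add_right r s)
  have hc_step : H ^ (r + s + 1) ≤ span {a} * H ^ (r + s) ⊔ span {c} * H ^ (r + s) := by
    rw [← Ideal.sup_mul, ← span_insert]
    exact hs _ (Nat.le_add_left s r)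
  generalize r + s = r at hb_step hc_step
  have hpow : H ^ (r + j + 1 + j) ≤ span {a ^ (j + 1), b ^ j * c} * H ^ (r + j) := by
    rw [span_insert, Ideal.sup_mul]
    exact pow_add_le_span_pow_mul_sup_mul ha
      (pow_add_le_span_mul_sup_span_pow_mul hb hb_step hc_step j) j
  refine isReduction_of_pow_succ_le (r := r + j) (span_le.2 ?_) ?_
  · rintro w (rfl | rfl)
    · exact pow_mem_pow ha _
    · exact mul_mem_mul (pow_mem_pow hb j) hc
  · rw [← pow_mul, ← pow_mul, show (j + 1) * (r + j + 1) = r + j + 1 + j + j * (r + j) by ring,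
      show (j + 1) * (r + j) = r + j + j * (r + j) by ring, pow_add, pow_add _ (r + j), ← mul_assoc]
    exact mul_mono_left hpow

section ResidueField

open Polynomial

theorem sum_C_mul_X_pow_ne_zero {n : ℕ} {c : Fin n → R} {i : Fin n} (hi : c i ≠ 0) :
    ∑ i, C (c i) * X ^ (i : ℕ) ≠ 0 := fun h => hi <| by
  simpa [finsetSum_coeff, coeff_C_mul, coeff_X_pow, Fin.val_inj] using congrArg (coeff · i) h

theorem exists_sum_mul_pow_ne_zero [IsDomain R] [Infinite R] {n : ℕ} {c : Fin n → R} {i : Fin n}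
    (hi : c i ≠ 0) : ∃ x, ∑ i, c i * x ^ (i : ℕ) ≠ 0 := by
  by_contra! hzero
  exact sum_C_mul_X_pow_ne_zero hi (Polynomial.funext fun x => by
    simpa [eval_finsetSum] using hzero x)

variable [IsLocalRing R] [Infinite (ResidueField R)]

theorem exists_isUnit_sum_mul_pow_mul_pow {n : ℕ} {c : Fin n × Fin n → R} (hc : ∃ i, IsUnit (c i)) :
    ∃ x y : R, IsUnit (∑ i, c i * (x ^ (i.1 : ℕ) * y ^ (i.2 : ℕ))) := by
  obtain ⟨⟨a, b⟩, hab⟩ := hc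
  obtain ⟨y, hy⟩ := exists_sum_mul_pow_ne_zero (c := fun b => residue R (c (a, b))) (i := b)
    ((residue_ne_zero_iff_isUnit _).2 hab)
  obtain ⟨x, hx⟩ := exists_sum_mul_pow_ne_zero
    (c := fun a => ∑ b, residue R (c (a, b)) * y ^ (b : ℕ)) hy
  obtain ⟨x, rfl⟩ := residue_surjective x
  obtain ⟨y, rfl⟩ := residue_surjective y
  refine ⟨x, y, (residue_ne_zero_iff_isUnit _).1 ?_⟩
  convert hx using 1
  simp only [Fintype.sum_prod_type, map_sum, map_mul, map_pow, Finset.sum_mul]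
  exact Finset.sum_congr rfl fun a _ => Finset.sum_congr rfl fun b _ => by ring

theorem exists_seq_isUnit_sub_and_isUnit_sum_mul_pow {n : ℕ} {d : Fin n → R}
    (hd : ∃ i, IsUnit (d i)) : ∃ c : ℕ → R, c 0 = 0 ∧ (∀ k l, k ≠ l → IsUnit (c k - c l)) ∧
      ∀ l, 1 ≤ l → IsUnit (∑ i, d i * c l ^ (i : ℕ)) := by
  obtain ⟨i, hi⟩ := hd
  set f : (ResidueField R)[X] := ∑ i, C (residue R (d i)) * X ^ (i : ℕ) with hf
  have hf₀ : f * X ≠ 0 := mul_ne_zero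
    (sum_C_mul_X_pow_ne_zero ((residue_ne_zero_iff_isUnit _).2 hi)) X_ne_zero
  have hinf : ((f * X).rootSet (ResidueField R))ᶜ.Infinite := (rootSet_finite _ _).infinite_compl
  let e := hinf.natEmbedding
  choose r hr using fun n => residue_surjective (R := R) (e n : ResidueField R)
  have he (n : ℕ) : f.eval (residue R (r n)) ≠ 0 ∧ residue R (r n) ≠ 0 := by
    have := (e n).2
    rw [Set.mem_compl_iff, mem_rootSet, ← hr] at this
    simpa [hf₀] using this
  refine ⟨fun l => l.casesOn 0 r, rfl, fun k l hkl => ?_, fun l hl => ?_⟩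
  · rw [← residue_ne_zero_iff_isUnit, map_sub, sub_ne_zero]
    rcases k with _ | k <;> rcases l with _ | l
    · exact absurd rfl hkl
    · simpa using (he l).2.symm
    · simpa using (he k).2
    · exact fun h => hkl (congrArg _ (e.injective (Subtype.ext (by simpa only [hr] using h))))
  · obtain ⟨n, rfl⟩ := Nat.exists_eq_add_of_le' hl
    rw [← residue_ne_zero_iff_isUnit]
    simpa [hf, eval_finsetSum] using (he n).1

end ResidueField

variable [IsNoetherianRing R] [IsLocalRing R]

theorem exists_sum_mul_mem_maximalIdeal_mul_pow {p q : R} (hH : IsReduction (span {p, q}) H)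
    {f g h : R} (hf : f ∈ H) (hg : g ∈ H) (hh : h ∈ H) :
    ∃ (n : ℕ) (c : Fin (n + 1) × Fin (n + 1) → R), (∃ i, IsUnit (c i)) ∧
      ∑ i, c i * (f ^ (i.1 : ℕ) * (g ^ (i.2 : ℕ) * h ^ (2 * n + 2 - i.1 - i.2))) ∈
        maximalIdeal R * H ^ (2 * n + 2) := by
  obtain ⟨-, r, hr⟩ := hH
  obtain ⟨s, hs⟩ := (IsNoetherian.noetherian (H ^ r) : (H ^ r).FG)
  -- With `μ = s.card`, the ideal `H ^ (r + k)` has at most `(k + 1) * μ` generators, which grows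
  -- linearly in `k`, while there are quadratically many monomials.
  let n := 3 * s.card + r
  obtain ⟨k, hk⟩ : ∃ k, 2 * n + 2 = r + k := ⟨2 * n + 2 - r, by omega⟩
  obtain ⟨t, htcard, ht⟩ := exists_finset_span_eq_span_pair_pow_mul p q k s
  rw [show span (s : Set R) = H ^ r from hs, ← pow_add_eq_pow_mul_pow hr, ← hk] at ht
  refine ⟨n, ?_⟩
  rw [← ht]
  exact exists_sum_mul_mem_maximalIdeal_mul_span (ι := Fin (n + 1) × Fin (n + 1)) t (by
    rw [Fintype.card_prod, Fintype.card_fin]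
    refine htcard.trans_lt ?_
    have hk' : k + 1 ≤ 2 * n + 3 := by omega
    have hn : 3 * s.card ≤ n := by omega
    nlinarith [Nat.mul_le_mul_right s.card hk'])
    (fun i => f ^ (i.1 : ℕ) * (g ^ (i.2 : ℕ) * h ^ (2 * n + 2 - i.1 - i.2)))
    fun i => by
      rw [ht]
      refine mul_mem_pow_of_le (pow_mem_pow hf _)
        (mul_mem_pow_of_le (pow_mem_pow hg _) (pow_mem_pow hh _) le_rfl) ?_
      omega

theorem IsReduction.span_pair_sub_of_sq_mem {a b h : R} (hab : IsReduction (span {a, b}) H)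
    (hh : h ∈ H) (hsq : h ^ 2 ∈ span {a} * H) (c : R) : IsReduction (span {a, b - c * h}) H := by
  refine (hab.span_pair_sub_sup hh c).of_sup_span_singleton (D := 1) ?_
  rw [pow_one]
  exact mem_sup_left (mul_mono_left (span_mono (by simp)) hsq)

theorem IsReduction.exists_forall_isReduction_span_pair_sub {a b h : R}
    (hab : IsReduction (span {a, b}) H) (hh : h ∈ H) :
    ∃ (n : ℕ) (d : Fin n → R), (∃ i, IsUnit (d i)) ∧
      ∀ c, IsUnit (∑ i, d i * c ^ (i : ℕ)) → IsReduction (span {a, b - c * h}) H := by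
  classical
  have hb : b ∈ H := hab.1 (right_mem_span_pair a b)
  obtain ⟨r, hr⟩ := hab.2
  obtain ⟨s, hs⟩ := (IsNoetherian.noetherian (H ^ r) : (H ^ r).FG)
  -- Modulo `a`, the power `H ^ (D + 1)` is generated by `s.card` elements.
  obtain ⟨D, hD⟩ : ∃ D, D = r + s.card := ⟨_, rfl⟩
  let t : Finset R := s.image (b ^ (s.card + 1) * ·)
  have ht : span (t : Set R) = span {b ^ (s.card + 1)} * H ^ r := by
    rw [Finset.coe_image, ← hs, submodule_span_eq, span_mul_span', Set.singleton_mul]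
  have hdecomp : H ^ (D + 1) ≤ span {a} * H ^ D ⊔ span (t : Set R) :=
    hD ▸ ht ▸ pow_add_succ_le_span_mul_sup hab.1 hr s.card
  have htD : span (t : Set R) ≤ H ^ (D + 1) := by
    rw [ht, show D + 1 = s.card + 1 + r by omega, pow_add H]
    exact mul_mono_left ((span_singleton_le_iff_mem _).2 (pow_mem_pow hb _))
  have hmem (i : Fin (D + 2)) : b ^ (i : ℕ) * h ^ (D + 1 - i) ∈ H ^ (D + 1) :=
    mul_mem_pow_of_le (pow_mem_pow hb _) (pow_mem_pow hh _) (by omega)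
  choose v hv u hu huv using fun i => Submodule.mem_sup.1 (hdecomp (hmem i))
  obtain ⟨d, hd, hsum⟩ := exists_sum_mul_mem_maximalIdeal_mul_span t
    (by rw [Fintype.card_fin]; exact Finset.card_image_le.trans_lt (by omega)) u hu
  refine ⟨D + 2, d, hd, fun c hc => (hab.span_pair_sub_sup hh c).of_sum_mem d
    (fun i => b ^ (i : ℕ) * h ^ (D + 1 - i)) (fun i => c ^ (i : ℕ)) (D := D) (fun i => ?_) hc ?_⟩
  · have hi : (i : ℕ) + (D + 1 - i) = D + 1 := by omega
    simpa [← pow_add, hi] using pow_mul_sub_mem_mul_pow hb hh (right_mem_span_pair a (b - c * h))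
      (pow_mem_pow hh (D + 1 - i)) i
  · simp only [← huv, mul_add, Finset.sum_add_distrib]
    exact Submodule.add_mem_sup
      (sum_mem fun i _ => mul_mem_left _ _ (mul_mono_left (span_mono (by simp)) (hv i)))
      (mul_mono_right htD hsum)

variable [Infinite (ResidueField R)]

theorem IsReduction.exists_seq_isReduction_span_pair_sub {a b h : R}
    (hab : IsReduction (span {a, b}) H) (hh : h ∈ H) :
    ∃ c : ℕ → R, c 0 = 0 ∧ (∀ k l, k ≠ l → IsUnit (c k - c l)) ∧
      ∀ l, 1 ≤ l → IsReduction (span {a, b - c l * h}) H := by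
  obtain ⟨n, d, hd, hred⟩ := hab.exists_forall_isReduction_span_pair_sub hh
  obtain ⟨c, hc₀, hc, hcd⟩ := exists_seq_isUnit_sub_and_isUnit_sum_mul_pow hd
  exact ⟨c, hc₀, hc, fun l hl => hred _ (hcd l hl)⟩

theorem IsReduction.exists_isReduction_span_pair_sub_sup {p q : R}
    (hH : IsReduction (span {p, q}) H) {f g h : R}
    (hJ : IsReduction (span {f, g} ⊔ (span {h} ⊔ J)) H) :
    ∃ x y : R, IsReduction (span {f - x * h, g - y * h} ⊔ J) H := by
  have hf : f ∈ H := hJ.1 (mem_sup_left (left_mem_span_pair f g))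
  have hg : g ∈ H := hJ.1 (mem_sup_left (right_mem_span_pair f g))
  have hh : h ∈ H := hJ.1 (mem_sup_right (mem_sup_left (mem_span_singleton_self h)))
  obtain ⟨n, c, hc, hsum⟩ := exists_sum_mul_mem_maximalIdeal_mul_pow hH hf hg hh
  obtain ⟨x, y, hxy⟩ := exists_isUnit_sum_mul_pow_mul_pow hc
  refine ⟨x, y, ?_⟩
  rw [← sup_assoc, ← span_pair_sub_sup_span_singleton f g h x y, sup_right_comm] at hJ
  refine hJ.of_sum_mem c _ _ (fun i => ?_) hxy (mem_sup_right hsum)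
  exact pow_mul_pow_mul_pow_sub_mem_mul_pow hf hg hh (mem_sup_left (left_mem_span_pair _ _))
    (mem_sup_left (right_mem_span_pair _ _)) (by omega)

theorem IsReduction.exists_isReduction_span_pair_le {p q : R} (hH : IsReduction (span {p, q}) H)
    (l : List R) {f g : R} (hJ : IsReduction (span {f, g} ⊔ ofList l) H) :
    ∃ f' g' : R, IsReduction (span {f', g'}) H ∧ span {f', g'} ≤ span {f, g} ⊔ ofList l := by
  induction l generalizing f g with
  | nil =>
    rw [ofList_nil, sup_bot_eq] at hJ ⊢
    exact ⟨f, g, hJ, le_rfl⟩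
  | cons a l ih =>
    rw [ofList_cons] at hJ ⊢
    obtain ⟨x, y, hxy⟩ := hH.exists_isReduction_span_pair_sub_sup hJ
    obtain ⟨f', g', hred, hle⟩ := ih hxy
    refine ⟨f', g', hred, hle.trans ?_⟩
    rw [← sup_assoc, ← span_pair_sub_sup_span_singleton f g a x y]
    exact sup_le_sup_right le_sup_left _

theorem IsMinimalReduction.exists_eq_span_pair {p q : R} (hH : IsReduction (span {p, q}) H)
    (hJ : IsMinimalReduction J H) : ∃ f g, J = span {f, g} := by
  obtain ⟨s, hs⟩ := (IsNoetherian.noetherian J : J.FG)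
  have hJs : span {0, 0} ⊔ ofList s.toList = J := by
    rw [← hs]
    simp [ofList, submodule_span_eq]
  obtain ⟨f, g, hred, hle⟩ := hH.exists_isReduction_span_pair_le s.toList (f := 0) (g := 0)
    (by rw [hJs]; exact hJ.1)
  exact ⟨f, g, (hJ.2 _ hred (hle.trans hJs.le)).symm⟩

end Reductions

section Saturation

open Ideal

variable {R : Type u} [CommRing R] {I Q Q' : Ideal R}

/-- Membership in `Q` can be tested after localizing at the minimal primes of `I`. -/
def IsSaturatedAt (I Q : Ideal R) : Prop :=
  ∀ z, (∀ p ∈ I.minimalPrimes, ∃ w ∉ p, w * z ∈ Q) → z ∈ Q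

theorem algebraMap_mem_map_atPrime_iff {p : Ideal R} [p.IsPrime] {z : R} :
    algebraMap R (Localization.AtPrime p) z ∈ Q.map (algebraMap R (Localization.AtPrime p)) ↔
      ∃ w ∉ p, w * z ∈ Q :=
  IsLocalization.algebraMap_mem_map_algebraMap_iff p.primeCompl _ Q z

theorem isSaturatedAt_top : IsSaturatedAt I ⊤ := fun _ _ => Submodule.mem_top

theorem IsSaturatedAt.le_of_forall_map_le (hQ : IsSaturatedAt I Q)
    (hle : ∀ (p : Ideal R) [p.IsPrime], p ∈ I.minimalPrimes →
      Q'.map (algebraMap R (Localization.AtPrime p)) ≤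
        Q.map (algebraMap R (Localization.AtPrime p))) :
    Q' ≤ Q := by
  refine fun z hz => hQ z fun p hp => ?_
  have := hp.1.1
  exact algebraMap_mem_map_atPrime_iff.1 (hle p hp (mem_map_of_mem _ hz))

theorem IsSaturatedAt.eq_of_forall_map_eq (hQ : IsSaturatedAt I Q) (hQ' : IsSaturatedAt I Q')
    (heq : ∀ (p : Ideal R) [p.IsPrime], p ∈ I.minimalPrimes →
      Q.map (algebraMap R (Localization.AtPrime p)) =
        Q'.map (algebraMap R (Localization.AtPrime p))) :
    Q = Q' :=
  le_antisymm (hQ'.le_of_forall_map_le fun p _ hp => (heq p hp).le)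
    (hQ.le_of_forall_map_le fun p _ hp => (heq p hp).ge)

theorem IsSaturatedAt.colon (hQ : IsSaturatedAt I Q) (J : Ideal R) :
    IsSaturatedAt I (Submodule.colon Q J) := by
  refine fun z hz => Submodule.mem_colon.2 fun a ha => hQ _ fun p hp => ?_
  obtain ⟨w, hw, hwz⟩ := hz p hp
  exact ⟨w, hw, by simpa only [smul_eq_mul, mul_assoc] using Submodule.mem_colon.1 hwz a ha⟩

theorem IsRegularPair.isSaturatedAt_mul_sup_mul {f g : R} (h : IsRegularPair f g)
    (hfg : IsSaturatedAt I (span {f, g})) (hQ : IsSaturatedAt I Q) (hQ' : IsSaturatedAt I Q')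
    (hg : g ∈ Q) (hf : f ∈ Q') :
    IsSaturatedAt I (span {f} * Q ⊔ span {g} * Q') := by
  have hmem (z : R) : z ∈ span {f} * Q ⊔ span {g} * Q' ↔ ∃ a ∈ Q, ∃ b ∈ Q', f * a + g * b = z := by
    simp [Submodule.mem_sup, mem_span_singleton_mul]
  intro z hz
  obtain ⟨a, b, rfl⟩ := mem_span_pair.1 <| hfg z fun p hp => by
    obtain ⟨w, hw, hwz⟩ := hz p hp
    obtain ⟨a, -, b, -, e⟩ := (hmem _).1 hwz
    exact ⟨w, hw, mem_span_pair.2 ⟨a, b, by rw [← e]; ring⟩⟩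
  have hcoeff : ∀ p ∈ I.minimalPrimes, ∃ w ∉ p, w * a ∈ Q ∧ w * b ∈ Q' := by
    intro p hp
    obtain ⟨w, hw, hwz⟩ := hz p hp
    obtain ⟨a', ha', b', hb', e⟩ := (hmem _).1 hwz
    obtain ⟨t, ht⟩ := h.exists_eq_mul_of_mul_eq_mul (c := b' - w * b) (d := w * a - a')
      (by linear_combination e)
    have hta : w * a = a' + t * g := h.mul_left_cancel (by linear_combination g * ht - e)
    have htb : w * b = b' - t * f := by linear_combination -ht
    exact ⟨w, hw, hta ▸ add_mem ha' (mul_mem_left _ _ hg),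
      htb ▸ sub_mem hb' (mul_mem_left _ _ hf)⟩
  refine (hmem _).2 ⟨a, hQ a fun p hp => ?_, b, hQ' b fun p hp => ?_, by ring⟩
  · obtain ⟨w, hw, ha, -⟩ := hcoeff p hp
    exact ⟨w, hw, ha⟩
  · obtain ⟨w, hw, -, hb⟩ := hcoeff p hp
    exact ⟨w, hw, hb⟩

theorem map_atPrime_le_maximalIdeal {p : Ideal R} [p.IsPrime] (hp : I ≤ p) :
    I.map (algebraMap R (Localization.AtPrime p)) ≤ maximalIdeal (Localization.AtPrime p) :=
  map_le_iff_le_comap.2 fun z hz => (IsLocalization.AtPrime.to_map_mem_maximal_iff _ p z).2 (hp hz)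

theorem mem_colon_bot_mk_singleton {r z : R} :
    r ∈ Submodule.colon (⊥ : Submodule R (R ⧸ Q)) {Ideal.Quotient.mk Q z} ↔ r * z ∈ Q := by
  rw [Submodule.mem_colon_singleton, Submodule.mem_bot, Algebra.smul_def,
    Ideal.Quotient.algebraMap_eq, ← map_mul, Ideal.Quotient.eq_zero_iff_mem]

theorem isSaturatedAt_of_associatedPrimes_subset [IsNoetherianRing R]
    (hQ : associatedPrimes R (R ⧸ Q) ⊆ I.minimalPrimes) : IsSaturatedAt I Q := by
  intro z hz
  by_contra hzQ
  obtain ⟨P, hP, hle⟩ := exists_le_isAssociatedPrime_of_isNoetherianRing R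
    (Ideal.Quotient.mk Q z) (mt Ideal.Quotient.eq_zero_iff_mem.1 hzQ)
  obtain ⟨w, hw, hwz⟩ := hz P (hQ hP)
  exact hw (hle (mem_colon_bot_mk_singleton.2 hwz))

theorem minimalPrimes_subset_associatedPrimes_quotient [IsNoetherianRing R] :
    I.minimalPrimes ⊆ associatedPrimes R (R ⧸ I) := by
  simpa only [annihilator_quotient] using
    Module.associatedPrimes.minimalPrimes_annihilator_subset_associatedPrimes R (R ⧸ I)

theorem IsSaturatedAt.associatedPrimes_subset_minimalPrimes [IsNoetherianRing R]
    (hI : IsSaturatedAt I I) : associatedPrimes R (R ⧸ I) ⊆ I.minimalPrimes := by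
  intro P hP
  obtain ⟨hprime, x, hx⟩ := isAssociatedPrime_iff.1 hP
  obtain ⟨z, rfl⟩ := Ideal.Quotient.mk_surjective x
  have hmem (r : R) : r ∈ P ↔ r * z ∈ I := by rw [hx, mem_colon_bot_mk_singleton]
  by_contra hmin
  refine hprime.ne_top (P.eq_top_iff_one.2 ((hmem 1).2 ?_))
  rw [one_mul]
  refine hI z fun p hp => ?_
  by_contra! hp'
  have hPp : P ≤ p := fun r hr => by_contra fun hrp => hp' r hrp ((hmem r).1 hr)
  have hIP : I ≤ P := fun r hr => (hmem r).2 (mul_mem_right _ _ hr)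
  exact hmin (le_antisymm (hp.2 ⟨hprime, hIP⟩ hPp) hPp ▸ hp)

theorem mem_symbolicPower_iff {n : ℕ} {z : R} :
    z ∈ symbolicPower I n ↔ ∃ w ∈ assComplement I, w * z ∈ I ^ n := by
  rw [symbolicPower, mem_comap]
  exact IsLocalization.algebraMap_mem_map_algebraMap_iff (assComplement I) _ _ z

theorem pow_le_symbolicPower (n : ℕ) : I ^ n ≤ symbolicPower I n := le_comap_map

theorem symbolicPower_succ_le [IsNoetherianRing R] (n : ℕ) : symbolicPower I (n + 1) ≤ I := by
  intro z hz
  obtain ⟨w, hw, hwz⟩ := mem_symbolicPower_iff.1 hz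
  by_contra hzI
  obtain ⟨P, hP, hle⟩ := exists_le_isAssociatedPrime_of_isNoetherianRing R
    (Ideal.Quotient.mk I z) (mt Ideal.Quotient.eq_zero_iff_mem.1 hzI)
  exact hw P hP (hle (mem_colon_bot_mk_singleton.2 (pow_le_self n.succ_ne_zero hwz)))

theorem map_symbolicPower [IsNoetherianRing R] {p : Ideal R} [p.IsPrime]
    (hp : p ∈ I.minimalPrimes) (n : ℕ) :
    (symbolicPower I n).map (algebraMap R (Localization.AtPrime p)) =
      I.map (algebraMap R (Localization.AtPrime p)) ^ n := by
  rw [← Ideal.map_pow]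
  refine le_antisymm (map_le_iff_le_comap.2 fun z hz => ?_) (map_mono (pow_le_symbolicPower n))
  obtain ⟨w, hw, hwz⟩ := mem_symbolicPower_iff.1 hz
  exact algebraMap_mem_map_atPrime_iff.2
    ⟨w, hw p (minimalPrimes_subset_associatedPrimes_quotient hp), hwz⟩

theorem IsSaturatedAt.symbolicPower [IsNoetherianRing R] (hI : IsSaturatedAt I I) (n : ℕ) :
    IsSaturatedAt I (symbolicPower I n) := by
  intro z hz
  by_contra hzn
  have hsub : (Submodule.colon (I ^ n) {z} : Set R) ⊆ ⋃ p ∈ I.minimalPrimes, (p : Set R) := by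
    intro w hw
    by_contra hwp
    simp only [Set.mem_iUnion, not_exists] at hwp
    exact hzn (mem_symbolicPower_iff.2
      ⟨w, fun p hp hwp' => hwp p (hI.associatedPrimes_subset_minimalPrimes hp) hwp',
        Submodule.mem_colon_singleton.1 hw⟩)
  have hfin := finite_minimalPrimes_of_isNoetherianRing R I
  obtain ⟨p, hp, hle⟩ := (subset_union_prime_finite hfin ⊤ ⊤ fun p hp _ _ => hp.1.1).1 hsub
  have := hp.1.1
  obtain ⟨w, hw, hwz⟩ := hz p hp
  have hwz' := mem_map_of_mem (algebraMap R (Localization.AtPrime p)) hwz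
  rw [map_symbolicPower hp, ← Ideal.map_pow, algebraMap_mem_map_atPrime_iff] at hwz'
  obtain ⟨w', hw', hww'⟩ := hwz'
  exact (hp.1.1.mem_or_mem (hle (Submodule.mem_colon_singleton.2
    (by rwa [smul_eq_mul, mul_assoc])))).elim hw' hw

end Saturation

section Generators

open Ideal

variable {R : Type u} [CommRing R] {I J H : Ideal R}

theorem exists_forall_notMem_and_forall_mem_minimalPrimes (hfin : I.minimalPrimes.Finite) :
    ∃ e : Ideal R → R, ∀ p ∈ I.minimalPrimes,
      e p ∉ p ∧ ∀ q ∈ I.minimalPrimes, q ≠ p → e p ∈ q := by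
  classical
  suffices h : ∀ p ∈ I.minimalPrimes, ∃ e, e ∉ p ∧ ∀ q ∈ I.minimalPrimes, q ≠ p → e ∈ q by
    choose! e he using h
    exact ⟨e, he⟩
  intro p hp
  have hnle : ¬ (hfin.toFinset.erase p).inf id ≤ p := by
    rw [hp.1.1.inf_le']
    rintro ⟨q, hq, hqp⟩
    rw [Finset.mem_erase, hfin.mem_toFinset] at hq
    exact hq.1 (le_antisymm hqp (hp.2 hq.2.1 hqp))
  obtain ⟨e, he, hep⟩ := SetLike.not_le_iff_exists.1 hnle
  exact ⟨e, hep, fun q hq hqp => Finset.inf_le (f := id)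
    (Finset.mem_erase.2 ⟨hqp, hfin.mem_toFinset.2 hq⟩) he⟩

theorem span_pair_mul_left_of_isUnit {u : R} (hu : IsUnit u) (x y : R) :
    span {x, u * y} = span {x, y} := by
  rw [span_insert, span_singleton_mul_left_unit hu, ← span_insert]

theorem span_pair_mul_add_eq [IsLocalRing R] {u : R} (hu : IsUnit u) {x y w : R}
    (hw : w ∈ maximalIdeal R * span {x, y}) : span {x, u * y + w} = span {x, y} := by
  obtain ⟨d, -, c, hc, rfl⟩ := mem_span_pair_mul.1 (mul_comm (maximalIdeal R) _ ▸ hw)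
  have huc : IsUnit (u + c) := by
    by_contra hmem
    exact (Submodule.add_mem_iff_left _ hc).1 ((mem_maximalIdeal _).2 hmem) hu
  rw [show u * y + (d * x + c * y) = (u + c) * y + d * x by ring, span_pair_add_mul_left,
    span_pair_mul_left_of_isUnit huc]

theorem exists_mem_map_atPrime_eq_span_pair {p : Ideal R} [p.IsPrime]
    {x t : Localization.AtPrime p}
    (ht : I.map (algebraMap R (Localization.AtPrime p)) = span {x, t}) :
    ∃ y ∈ I, I.map (algebraMap R (Localization.AtPrime p)) =
      span {x, algebraMap R (Localization.AtPrime p) y} := by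
  obtain ⟨⟨y, s⟩, hy⟩ := (IsLocalization.mem_map_algebraMap_iff p.primeCompl _).1
    (ht ▸ right_mem_span_pair x t)
  refine ⟨y, y.2, ?_⟩
  rw [← hy, mul_comm, span_pair_mul_left_of_isUnit (IsLocalization.map_units _ s), ht]

theorem exists_mem_forall_map_atPrime_eq_span_pair [IsNoetherianRing R] {a : R}
    (hI : ∀ (p : Ideal R) [p.IsPrime], p ∈ I.minimalPrimes →
      ∃ t, I.map (algebraMap R (Localization.AtPrime p)) =
        span {algebraMap R (Localization.AtPrime p) a, t}) :
    ∃ y ∈ I, ∀ (p : Ideal R) [p.IsPrime], p ∈ I.minimalPrimes →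
      I.map (algebraMap R (Localization.AtPrime p)) =
        span {algebraMap R (Localization.AtPrime p) a, algebraMap R _ y} := by
  classical
  have hfin := finite_minimalPrimes_of_isNoetherianRing R I
  obtain ⟨e, he⟩ := exists_forall_notMem_and_forall_mem_minimalPrimes hfin
  have hlocal : ∀ p ∈ I.minimalPrimes, ∃ y ∈ I, ∀ [p.IsPrime],
      I.map (algebraMap R (Localization.AtPrime p)) =
        span {algebraMap R _ a, algebraMap R _ y} := by
    intro p hp
    have := hp.1.1
    obtain ⟨t, ht⟩ := hI p hp
    obtain ⟨y, hy, hyt⟩ := exists_mem_map_atPrime_eq_span_pair ht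
    exact ⟨y, hy, hyt⟩
  choose! y hyI hy using hlocal
  have hsum : ∑ q ∈ hfin.toFinset, e q * y q ∈ I := sum_mem fun q hq =>
    mul_mem_left _ _ (hyI q (hfin.mem_toFinset.1 hq))
  refine ⟨_, hsum, fun p _ hp => ?_⟩
  set φ := algebraMap R (Localization.AtPrime p)
  have hunit : IsUnit (φ (e p)) := IsLocalization.map_units _ (⟨e p, (he p hp).1⟩ : p.primeCompl)
  have hothers : φ (∑ q ∈ hfin.toFinset.erase p, e q * y q) ∈
      maximalIdeal (Localization.AtPrime p) * I.map φ := by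
    rw [map_sum]
    refine sum_mem fun q hq => ?_
    rw [Finset.mem_erase, hfin.mem_toFinset] at hq
    rw [map_mul]
    exact mul_mem_mul ((IsLocalization.AtPrime.to_map_mem_maximal_iff _ p _).2
      ((he q hq.2).2 p hp hq.1.symm)) (mem_map_of_mem _ (hyI q hq.2))
  rw [← Finset.add_sum_erase _ _ (hfin.mem_toFinset.2 hp), map_add, map_mul,
    span_pair_mul_add_eq hunit (hy p hp ▸ hothers), hy p hp]

end Generators

section Linkage

open Ideal

variable {S : Type u} [CommRing S] {x y f g : S}

/-- Wiebe's description of `(f, g) : (x, y)` as `(f, g, a d - b c)`. -/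
theorem IsRegularPair.exists_eq_det_mul_add (h : IsRegularPair x y) (hfg : IsRegularPair f g)
    {a b c d z : S} (hg : g = a * x + b * y) (hf : f = c * x + d * y)
    (hx : z * x ∈ span {f, g}) (hy : z * y ∈ span {f, g}) :
    ∃ e v w, z = e * (a * d - b * c) + v * f + w * g := by
  obtain ⟨s, r, hsr⟩ := mem_span_pair.1 hx
  obtain ⟨s', r', hsr'⟩ := mem_span_pair.1 hy
  obtain ⟨e, he⟩ := hfg.exists_eq_mul_of_mul_eq_mul (c := y * r - x * r') (d := x * s' - y * s)
    (by linear_combination y * hsr - x * hsr')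
  have he' : x * s' - y * s = e * g :=
    hfg.mul_left_cancel (by linear_combination -y * hsr + x * hsr' + g * he)
  obtain ⟨v, hv⟩ := h.exists_eq_mul_of_mul_eq_mul (c := r - e * d) (d := r' + e * c)
    (by linear_combination he + e * hf)
  obtain ⟨w, hw⟩ := h.exists_eq_mul_of_mul_eq_mul (c := s + e * b) (d := s' - e * a)
    (by linear_combination -he' - e * hg)
  refine ⟨e, w, v, h.mul_left_cancel ?_⟩
  linear_combination -hsr + g * hv + f * hw + e * d * hg - e * b * hf

theorem IsRegularPair.notMem_maximalIdeal_mul_of_mul_le [IsNoetherianRing S] [IsLocalRing S]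
    (h : IsRegularPair x y) (hfg : IsRegularPair f g) (hle : span {x, y} ≤ maximalIdeal S)
    (hg : g ∈ span {x, y} ^ 2) (hlink : span {x, y} * span {x, y} ≤ span {f, g}) :
    f ∉ maximalIdeal S * span {x, y} := by
  intro hf
  obtain ⟨c, hc, d, hd, hf'⟩ := mem_span_pair_mul.1 (mul_comm (maximalIdeal S) _ ▸ hf)
  obtain ⟨a, ha, b, hb, hg'⟩ := mem_span_pair_mul.1 (pow_two (span {x, y}) ▸ hg)
  have hbot : span {x, y} ≤ ⊥ ⊔ maximalIdeal S * span {x, y} := by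
    refine le_sup_of_le_right fun z hz => ?_
    obtain ⟨e, v, w, rfl⟩ := h.exists_eq_det_mul_add hfg hg' hf'
      (hlink (mul_mem_mul hz (left_mem_span_pair x y)))
      (hlink (mul_mem_mul hz (right_mem_span_pair x y)))
    refine add_mem (add_mem (mul_mem_left _ _ (sub_mem ?_ ?_)) (mul_mem_left _ _ hf))
      (mul_mem_left _ _ (mul_mono_left hle (pow_two (span {x, y}) ▸ hg)))
    · exact mul_comm d a ▸ mul_mem_mul hd ha
    · exact mul_comm c b ▸ mul_mem_mul hc hb
  have hx : x = 0 := le_of_le_sup_maximalIdeal_mul hbot (left_mem_span_pair x y)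
  exact one_ne_zero (h.eq_zero_of_mul_eq_zero 1 (by rw [hx, zero_mul]))

theorem IsRegularPair.of_right_mem_span_pair (hfg : IsRegularPair f g) (hg : g ∈ span {f, y}) :
    IsRegularPair f y where
  eq_zero_of_mul_eq_zero := hfg.eq_zero_of_mul_eq_zero
  dvd_of_dvd_mul := by
    rintro c ⟨d, hd⟩
    obtain ⟨a, b, rfl⟩ := mem_span_pair.1 hg
    exact hfg.dvd_of_dvd_mul c ⟨a * c + b * d, by linear_combination b * hd⟩

theorem IsRegularPair.span_singleton_mul_sup_eq_sq (h : IsRegularPair f y)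
    (hg : g ∈ span {f, y} ^ 2) (hlink : span {f, y} * span {f, y} ≤ span {f, g}) :
    span {f} * span {f, y} ⊔ span {g} = span {f, y} ^ 2 := by
  refine le_antisymm (sup_le ?_ (by simpa using hg)) ?_
  · rw [pow_two]
    exact mul_mono_left (by simpa using left_mem_span_pair f y)
  · intro z hz
    obtain ⟨a, b, hab⟩ := mem_span_pair.1 (hlink (pow_two (span {f, y}) ▸ hz))
    have ha : a ∈ span {f, y} := by
      simpa using h.mem_pow_sub_one_of_mul_mem_pow 2
        (show f * a ∈ span {f, y} ^ 2 from mul_comm a f ▸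
          (Submodule.add_mem_iff_left _ (mul_mem_left _ b hg)).1 (hab ▸ hz))
    rw [← hab, mul_comm a]
    exact add_mem (mem_sup_left (mul_mem_mul (mem_span_singleton_self f) ha))
      (mem_sup_right (mul_mem_left _ b (mem_span_singleton_self g)))

end Linkage

section Height

open Ideal RingTheory.Sequence

variable {R : Type u} [CommRing R] {I J H P : Ideal R}

theorem ht_le_height [P.IsPrime] (hIP : I ≤ P) : ht I ≤ P.height :=
  (iInf₂_le (⟨P, inferInstance⟩ : PrimeSpectrum R) hIP).trans_eq
    (IsLocalization.AtPrime.ringKrullDim_eq_height P _)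

theorem ht_top : ht (⊤ : Ideal R) = ⊤ :=
  iInf₂_eq_top.2 fun p hp => absurd (top_le_iff.1 hp) p.2.ne_top

theorem mem_minimalPrimes_of_height_le {n : ℕ}
    (hI : ∀ Q : Ideal R, Q.IsPrime → I ≤ Q → (n : ℕ∞) ≤ Q.height) [hP : P.IsPrime] (hIP : I ≤ P)
    (hPn : P.height ≤ n) : P ∈ I.minimalPrimes := by
  refine ⟨⟨hP, hIP⟩, fun Q ⟨hQ, hIQ⟩ hQP => le_of_eq ?_⟩
  by_contra hne
  have hlt := height_add_one_le_of_lt_of_isPrime (lt_of_le_of_ne hQP (Ne.symm hne))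
  exact ((ENat.add_one_le_iff (ENat.natCast_ne_top n)).1
    ((add_le_add_left (hI Q hQ hIQ) 1).trans (hlt.trans hPn))).false

theorem height_le_two_of_mem_minimalPrimes_span_pair [IsNoetherianRing R] {f g : R}
    (hP : P ∈ (span {f, g}).minimalPrimes) : P.height ≤ 2 := by
  classical
  rw [← Finset.coe_pair] at hP
  exact (height_le_card_of_mem_minimalPrimes_span_finset hP).trans
    (by exact_mod_cast Finset.card_le_two)

theorem ringKrullDim_quotient_map_atPrime_eq_zero [P.IsPrime] (hP : P ∈ I.minimalPrimes) :
    ringKrullDim (Localization.AtPrime P ⧸ I.map (algebraMap R (Localization.AtPrime P))) = 0 := by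
  have hle := map_atPrime_le_maximalIdeal hP.1.2
  have : Nontrivial (Localization.AtPrime P ⧸ I.map (algebraMap R (Localization.AtPrime P))) :=
    Ideal.Quotient.nontrivial_iff.2 (ne_top_of_le_ne_top IsPrime.ne_top' hle)
  refine ringKrullDimZero_iff_ringKrullDim_eq_zero.1
    (krullDimLE_zero_quotient_iff_forall_minimalPrimes_isMaximal.2 fun q hq => ?_)
  rw [← radical_minimalPrimes,
    IsLocalization.AtPrime.radical_map_of_mem_minimalPrimes (Localization.AtPrime P) P I hP,
    IsLocalization.AtPrime.map_eq_maximalIdeal, minimalPrimes_eq_subsingleton_self] at hq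
  exact hq ▸ inferInstance

theorem exists_isRegularPair_map_atPrime_eq [IsNoetherianRing R] [P.IsPrime]
    (hP : P ∈ I.minimalPrimes) (hheight : P.height = 2) {rs : List (Localization.AtPrime P)}
    (hrs : IsRegular (Localization.AtPrime P) rs)
    (hI : ofList rs = I.map (algebraMap R (Localization.AtPrime P))) :
    ∃ x y, IsRegularPair x y ∧ I.map (algebraMap R (Localization.AtPrime P)) = span {x, y} := by
  have hlen : rs.length = 2 := by
    have hdim := ringKrullDim_add_length_eq_ringKrullDim_of_isRegular rs hrs
    rw [hI, ringKrullDim_quotient_map_atPrime_eq_zero hP, zero_add,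
      IsLocalization.AtPrime.ringKrullDim_eq_height P, hheight] at hdim
    exact_mod_cast hdim
  obtain ⟨x, y, rfl⟩ := List.length_eq_two.1 hlen
  refine ⟨x, y, isRegularPair_iff_isWeaklyRegular.2 hrs.toIsWeaklyRegular, ?_⟩
  rw [← hI, ofList_cons, ofList_singleton, ← span_insert]

end Height

section SelfLinked

open Ideal

variable {R : Type u} [CommRing R] {I J H : Ideal R} {Δ α : R}

theorem IsRegularPair.atPrime {f g : R} (h : IsRegularPair f g) (p : Ideal R) [p.IsPrime] :
    IsRegularPair (algebraMap R (Localization.AtPrime p) f)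
      (algebraMap R (Localization.AtPrime p) g) :=
  isRegularPair_iff_isWeaklyRegular.2
    ((isRegularPair_iff_isWeaklyRegular.1 h).of_isLocalization _ p.primeCompl)

theorem IsReduction.le_radical (hJ : IsReduction J H) : H ≤ J.radical := by
  obtain ⟨-, r, hr⟩ := hJ
  exact fun z hz => ⟨r + 1, mul_le_left (hr.le (pow_mem_pow hz (r + 1)))⟩

variable [IsLocalRing R]

/-- The hypotheses on a self-linked ideal `I = (Δ, α) : I`: it has height two in a Cohen–Macaulay
local ring, is generically a complete intersection, and `Δ` lies in its second symbolic power. -/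
structure IsSelfLinked (I : Ideal R) (Δ α : R) : Prop where
  isCMLocalRing : IsCMLocalRing R
  ht_eq_two : ht I = ((2 : ℕ) : WithBot ℕ∞)
  exists_isRegular : ∀ p : Ideal R, ∀ hp : p ∈ I.minimalPrimes,
    letI : p.IsPrime := hp.1.1
    ∃ rs : List (Localization.AtPrime p),
      RingTheory.Sequence.IsRegular (Localization.AtPrime p) rs ∧
        ofList rs = I.map (algebraMap R (Localization.AtPrime p))
  left_mem : Δ ∈ symbolicPower I 2
  right_mem : α ∈ I
  eq_colon : I = Submodule.colon (span {Δ, α}) I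

namespace IsSelfLinked

theorem two_le_height (h : IsSelfLinked I Δ α) {P : Ideal R} [P.IsPrime] (hIP : I ≤ P) :
    2 ≤ P.height :=
  WithBot.coe_le_coe.1 (h.ht_eq_two.symm.trans_le (ht_le_height hIP))

theorem le_maximalIdeal (h : IsSelfLinked I Δ α) : I ≤ maximalIdeal R := by
  refine IsLocalRing.le_maximalIdeal fun htop => ?_
  have := h.ht_eq_two
  rw [htop, ht_top] at this
  exact absurd this (by decide)

theorem mul_self_le (h : IsSelfLinked I Δ α) : I * I ≤ span {α, Δ} := by
  rw [Set.pair_comm]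
  refine mul_le.2 fun a ha b hb => ?_
  rw [h.eq_colon] at ha
  exact Submodule.mem_colon.1 ha b hb

theorem le_radical (h : IsSelfLinked I Δ α) : I ≤ (span {α, Δ}).radical :=
  fun z hz => ⟨2, h.mul_self_le (pow_two z ▸ mul_mem_mul hz hz)⟩

theorem map_mul_map_le (h : IsSelfLinked I Δ α) {p : Ideal R} [p.IsPrime] :
    I.map (algebraMap R (Localization.AtPrime p)) * I.map (algebraMap R (Localization.AtPrime p)) ≤
      span {algebraMap R (Localization.AtPrime p) α, algebraMap R (Localization.AtPrime p) Δ} := by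
  rw [← Ideal.map_mul, ← Set.image_pair, ← map_span]
  exact map_mono h.mul_self_le

theorem sq_right_mem (h : IsSelfLinked I Δ α) : α ^ 2 ∈ symbolicPower I 2 :=
  pow_le_symbolicPower 2 (pow_mem_pow h.right_mem 2)

theorem span_pair_le (h : IsSelfLinked I Δ α) : span {α ^ 2, Δ} ≤ symbolicPower I 2 := by
  refine span_le.2 ?_
  rintro _ (rfl | rfl)
  exacts [h.sq_right_mem, h.left_mem]

variable [IsNoetherianRing R]

theorem left_mem_self (h : IsSelfLinked I Δ α) : Δ ∈ I := symbolicPower_succ_le 1 h.left_mem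

theorem isRegularPair_and_isSaturatedAt (h : IsSelfLinked I Δ α) {f g : R} (hf : f ∈ I)
    (hg : g ∈ I) (hrad : I ≤ (span {f, g}).radical) :
    IsRegularPair f g ∧ IsSaturatedAt I (span {f, g}) := by
  have hlist : ofList [f, g] = span {f, g} := by
    rw [ofList_cons, ofList_singleton, ← span_insert]
  have hle {P : Ideal R} (hP : P.IsPrime) (hfg : span {f, g} ≤ P) : I ≤ P :=
    hrad.trans (hP.radical_le_iff.2 hfg)
  obtain ⟨hreg, hunmixed⟩ := h.isCMLocalRing.isWeaklyRegular_and_unmixed (fs := [f, g])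
    (by simpa only [List.forall_mem_cons, List.not_mem_nil, false_imp_iff, imp_true_iff, and_true]
      using ⟨h.le_maximalIdeal hf, h.le_maximalIdeal hg⟩)
    fun P hP hfg => h.two_le_height (hle hP (hlist ▸ hfg))
  rw [hlist] at hunmixed
  refine ⟨isRegularPair_iff_isWeaklyRegular.2 hreg,
    isSaturatedAt_of_associatedPrimes_subset fun P hP => ?_⟩
  have := hP.isPrime
  have hfgP : span {f, g} ≤ P := by
    simpa only [Submodule.annihilator_top, annihilator_quotient] using hP.annihilator_le
  exact mem_minimalPrimes_of_height_le (n := 2) (fun Q _ hQ => h.two_le_height hQ)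
    (hle this hfgP) (hunmixed P hP)

theorem isRegularPair (h : IsSelfLinked I Δ α) : IsRegularPair α Δ :=
  (h.isRegularPair_and_isSaturatedAt h.right_mem h.left_mem_self h.le_radical).1

theorem isSaturatedAt_span_pair_pow (h : IsSelfLinked I Δ α) (b : ℕ) :
    IsSaturatedAt I (span {α, Δ ^ b}) := by
  rcases b.eq_zero_or_pos with rfl | hb
  · rw [pow_zero, (eq_top_iff_one _).2 (right_mem_span_pair α 1)]
    exact isSaturatedAt_top
  · refine (h.isRegularPair_and_isSaturatedAt h.right_mem
      (pow_mem_of_mem _ h.left_mem_self _ hb) (h.le_radical.trans ?_)).2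
    refine radical_le_radical_iff.2 (span_le.2 ?_)
    rintro _ (rfl | rfl)
    exacts [Ideal.le_radical (left_mem_span_pair _ _), ⟨b, right_mem_span_pair _ _⟩]

theorem isSaturatedAt_self (h : IsSelfLinked I Δ α) : IsSaturatedAt I I := by
  have hcolon := (pow_one Δ ▸ h.isSaturatedAt_span_pair_pow 1).colon I
  rwa [Set.pair_comm, ← h.eq_colon] at hcolon

theorem height_eq_two (h : IsSelfLinked I Δ α) {p : Ideal R} [p.IsPrime]
    (hp : p ∈ I.minimalPrimes) : p.height = 2 := by
  refine le_antisymm (height_le_two_of_mem_minimalPrimes_span_pair (f := α) (g := Δ) ?_)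
    (h.two_le_height hp.1.2)
  have hrad : (span {α, Δ}).radical = I.radical :=
    le_antisymm (radical_mono (span_le.2 (by
      rintro _ (rfl | rfl); exacts [h.right_mem, h.left_mem_self])))
      (radical_le_radical_iff.2 h.le_radical)
  rwa [← radical_minimalPrimes, hrad, radical_minimalPrimes]

theorem map_left_mem_sq (h : IsSelfLinked I Δ α) {p : Ideal R} [p.IsPrime]
    (hp : p ∈ I.minimalPrimes) :
    algebraMap R (Localization.AtPrime p) Δ ∈
      I.map (algebraMap R (Localization.AtPrime p)) ^ 2 :=
  map_symbolicPower hp 2 ▸ mem_map_of_mem _ h.left_mem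

theorem exists_isRegularPair (h : IsSelfLinked I Δ α) :
    ∃ y ∈ I, ∀ (p : Ideal R) [p.IsPrime], p ∈ I.minimalPrimes →
      IsRegularPair (algebraMap R (Localization.AtPrime p) α)
          (algebraMap R (Localization.AtPrime p) y) ∧
        I.map (algebraMap R (Localization.AtPrime p)) =
          span {algebraMap R (Localization.AtPrime p) α,
            algebraMap R (Localization.AtPrime p) y} := by
  obtain ⟨y, hyI, hy⟩ := exists_mem_forall_map_atPrime_eq_span_pair fun p _ hp => by
    obtain ⟨rs, hrs, hrsI⟩ := h.exists_isRegular p hp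
    obtain ⟨x₁, x₂, hx, hI⟩ := exists_isRegularPair_map_atPrime_eq hp (h.height_eq_two hp) hrs hrsI
    have hlink := h.map_mul_map_le (p := p)
    have hleft := h.map_left_mem_sq hp
    have hle := map_atPrime_le_maximalIdeal hp.1.2
    have hright := mem_map_of_mem (algebraMap R (Localization.AtPrime p)) h.right_mem
    rw [hI] at hlink hleft hle hright ⊢
    obtain ⟨t, ht⟩ := exists_span_pair_eq_of_notMem hright
      (hx.notMem_maximalIdeal_mul_of_mul_le (h.isRegularPair.atPrime p) hle hleft hlink)
    exact ⟨t, ht.symm⟩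
  refine ⟨y, hyI, fun p _ hp => ⟨?_, hy p hp⟩⟩
  exact (h.isRegularPair.atPrime p).of_right_mem_span_pair
    (hy p hp ▸ mem_map_of_mem _ h.left_mem_self)

theorem symbolicPower_two_eq (h : IsSelfLinked I Δ α) :
    symbolicPower I 2 = span {α} * I ⊔ span {Δ} := by
  have hsat := h.isRegularPair.isSaturatedAt_mul_sup_mul
    (pow_one Δ ▸ h.isSaturatedAt_span_pair_pow 1) h.isSaturatedAt_self isSaturatedAt_top
    h.left_mem_self Submodule.mem_top
  rw [mul_top] at hsat
  obtain ⟨y, -, hy⟩ := h.exists_isRegularPair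
  refine (h.isSaturatedAt_self.symbolicPower 2).eq_of_forall_map_eq hsat fun p _ hp => ?_
  obtain ⟨hreg, hI⟩ := hy p hp
  have hlink := h.map_mul_map_le (p := p)
  have hleft := h.map_left_mem_sq hp
  rw [hI] at hlink hleft
  rw [map_symbolicPower hp, Ideal.map_sup, Ideal.map_mul, map_span, map_span, Set.image_singleton,
    Set.image_singleton, hI, hreg.span_singleton_mul_sup_eq_sq hleft hlink]

theorem mem_symbolicPower_two_iff (h : IsSelfLinked I Δ α) {z : R} :
    z ∈ symbolicPower I 2 ↔ ∃ i ∈ I, ∃ d, α * i + d * Δ = z := by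
  simp only [h.symbolicPower_two_eq, Submodule.mem_sup, mem_span_singleton_mul,
    mem_span_singleton', exists_exists_and_eq_and, exists_exists_eq_and]

theorem symbolicPower_two_sq (h : IsSelfLinked I Δ α) :
    symbolicPower I 2 ^ (1 + 1) = span {α ^ 2, Δ} * symbolicPower I 2 ^ 1 := by
  rw [pow_succ, pow_one]
  refine le_antisymm (mul_le.2 fun a ha b hb => ?_) (mul_mono_left h.span_pair_le)
  obtain ⟨i, hi, d, rfl⟩ := h.mem_symbolicPower_two_iff.1 ha
  obtain ⟨k, hk, e, rfl⟩ := h.mem_symbolicPower_two_iff.1 hb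
  refine mem_span_pair_mul.2 ⟨i * k, pow_le_symbolicPower 2 (pow_two I ▸ mul_mem_mul hi hk),
    α * (e * i + d * k) + d * e * Δ, h.mem_symbolicPower_two_iff.2 ⟨_, ?_, _, rfl⟩, by ring⟩
  exact add_mem (mul_mem_left _ _ hi) (mul_mem_left _ _ hk)

theorem isReduction_span_pair (h : IsSelfLinked I Δ α) :
    IsReduction (span {α ^ 2, Δ}) (symbolicPower I 2) :=
  ⟨h.span_pair_le, 1, h.symbolicPower_two_sq⟩

theorem symbolicPower_two_pow_succ (h : IsSelfLinked I Δ α) (j : ℕ) :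
    symbolicPower I 2 ^ (j + 1) =
      span {α ^ 2} * symbolicPower I 2 ^ j ⊔ span {Δ ^ j} * symbolicPower I 2 := by
  refine le_antisymm ?_ (sup_le ?_ ?_)
  · obtain _ | j := j
    · simp
    · simpa only [add_comm 1 j, pow_one] using
        pow_add_succ_le_span_mul_sup h.span_pair_le h.symbolicPower_two_sq j
  · exact pow_succ' (symbolicPower I 2) j ▸
      mul_mono_left ((span_singleton_le_iff_mem _).2 h.sq_right_mem)
  · exact pow_succ (symbolicPower I 2) j ▸
      mul_mono_left ((span_singleton_le_iff_mem _).2 (pow_mem_pow h.left_mem j))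

theorem symbolicPower_two_pow_succ_eq_sup (h : IsSelfLinked I Δ α) (j : ℕ) :
    symbolicPower I 2 ^ (j + 1) =
      span {α} * (span {α} * symbolicPower I 2 ^ j ⊔ span {Δ ^ j} * I) ⊔
        span {Δ ^ (j + 1)} * ⊤ :=
  calc
    symbolicPower I 2 ^ (j + 1)
      = span {α ^ 2} * symbolicPower I 2 ^ j ⊔ span {Δ ^ j} * (span {α} * I ⊔ span {Δ}) := by
        rw [h.symbolicPower_two_pow_succ, ← h.symbolicPower_two_eq]
    _ = _ := by
      rw [Ideal.mul_sup, Ideal.mul_sup, mul_top, mul_left_comm, span_singleton_mul_span_singleton,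
        ← pow_succ, ← sup_assoc, pow_two α, ← span_singleton_mul_span_singleton, mul_assoc]

theorem isSaturatedAt_symbolicPower_two_pow (h : IsSelfLinked I Δ α) (j : ℕ) :
    IsSaturatedAt I (symbolicPower I 2 ^ j) := by
  induction j with
  | zero => simpa only [pow_zero, one_eq_top] using isSaturatedAt_top
  | succ j ih =>
    have hinner := (h.isRegularPair.pow_right j).isSaturatedAt_mul_sup_mul
      (h.isSaturatedAt_span_pair_pow j) ih h.isSaturatedAt_self (pow_mem_pow h.left_mem j)
      h.right_mem
    rw [h.symbolicPower_two_pow_succ_eq_sup]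
    refine (h.isRegularPair.pow_right (j + 1)).isSaturatedAt_mul_sup_mul
      (h.isSaturatedAt_span_pair_pow (j + 1)) hinner isSaturatedAt_top
      (mem_sup_right ?_) Submodule.mem_top
    rw [pow_succ]
    exact mul_mem_mul (mem_span_singleton_self _) h.left_mem_self

theorem symbolicPower_two_mul (h : IsSelfLinked I Δ α) (j : ℕ) :
    symbolicPower I (2 * j) = symbolicPower I 2 ^ j :=
  (h.isSaturatedAt_self.symbolicPower _).eq_of_forall_map_eq
    (h.isSaturatedAt_symbolicPower_two_pow j) fun p _ hp => by
      rw [Ideal.map_pow, map_symbolicPower hp, map_symbolicPower hp, pow_mul]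

end IsSelfLinked

end SelfLinked

section Core

open Ideal

variable {R : Type u} [CommRing R]

theorem IsReduction.map {S : Type v} [CommRing S] {J H : Ideal R} (hJ : IsReduction J H)
    (φ : R →+* S) : IsReduction (J.map φ) (H.map φ) := by
  obtain ⟨hle, r, hr⟩ := hJ
  exact ⟨map_mono hle, r, by rw [← Ideal.map_pow, hr, Ideal.map_mul, Ideal.map_pow]⟩

theorem core_eq_and_gamma_eq {ι : Type*} [Fintype ι] {H C : Ideal R}
    (hC : ∀ J, IsMinimalReduction J H → C ≤ J) {J : ι → Ideal R}
    (hJ : ∀ i, IsMinimalReduction (J i) H) (hinf : ⨅ i, J i ≤ C)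
    (hcard : ∀ (t : ℕ) (J' : Fin t → Ideal R), (∀ i, IsMinimalReduction (J' i) H) →
      ⨅ i, J' i ≤ C → Fintype.card ι ≤ t) :
    core H = C ∧ gamma H = (Fintype.card ι : ℕ∞) := by
  have hcore : core H = C :=
    le_antisymm (le_trans (le_iInf fun i => sInf_le (α := Ideal R) (hJ i)) hinf) (le_sInf hC)
  refine ⟨hcore, le_antisymm (sInf_le ⟨_, rfl, J ∘ (Fintype.equivFin ι).symm, fun i => hJ _, ?_⟩)
    (le_sInf ?_)⟩
  · exact hcore.trans <| (le_antisymm (le_iInf fun i => hC _ (hJ i)) hinf).trans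
      ((Fintype.equivFin ι).symm.surjective.iInf_comp J).symm
  · rintro _ ⟨t, rfl, J', hJ', hcoreJ'⟩
    exact Nat.cast_le.2 (hcard t J' hJ' (hcoreJ'.ge.trans hcore.le))

theorem map_atPrime_iInf (p : Ideal R) [p.IsPrime] {t : ℕ} (J : Fin t → Ideal R) :
    (⨅ i, J i).map (algebraMap R (Localization.AtPrime p)) =
      ⨅ i, (J i).map (algebraMap R (Localization.AtPrime p)) := by
  rw [← Finset.inf_univ_eq_iInf, ← Finset.inf_univ_eq_iInf]
  exact map_finset_inf (IsLocalization.mapFrameHom p.primeCompl (Localization.AtPrime p)) _ _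

theorem pow_two_mul_le_symbolicPower_two_pow (I : Ideal R) (n : ℕ) :
    I ^ (2 * n) ≤ symbolicPower I 2 ^ n :=
  (pow_mul I 2 n).trans_le (pow_left_mono n (pow_le_symbolicPower 2))

variable [IsLocalRing R] [IsNoetherianRing R] {I J : Ideal R} {Δ α f g : R} {j : ℕ}

namespace IsSelfLinked

theorem isMinimalReduction_span_pair (h : IsSelfLinked I Δ α)
    (hJ : IsReduction (span {f, g}) (symbolicPower I 2 ^ (j + 1))) :
    IsMinimalReduction (span {f, g}) (symbolicPower I 2 ^ (j + 1)) :=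
  hJ.isMinimalReduction_of_two_le_height
    ((pow_le_self j.succ_ne_zero).trans ((symbolicPower_succ_le 1).trans h.le_maximalIdeal))
    fun _ hP hle => h.two_le_height
      (hP.le_of_pow_le ((pow_two_mul_le_symbolicPower_two_pow I _).trans hle))

theorem isSaturatedAt_span_pair_of_isReduction (h : IsSelfLinked I Δ α)
    (hJ : IsReduction (span {f, g}) (symbolicPower I 2 ^ (j + 1))) :
    IsSaturatedAt I (span {f, g}) := by
  have hle : span {f, g} ≤ I :=
    hJ.1.trans ((pow_le_self j.succ_ne_zero).trans (symbolicPower_succ_le 1))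
  refine (h.isRegularPair_and_isSaturatedAt (hle (left_mem_span_pair f g))
    (hle (right_mem_span_pair f g)) fun z hz => radical_isRadical _ ⟨2 * (j + 1), ?_⟩).2
  exact hJ.le_radical (pow_two_mul_le_symbolicPower_two_pow I _ (pow_mem_pow hz _))

theorem map_atPrime_isReduction (h : IsSelfLinked I Δ α)
    (hJ : IsReduction J (symbolicPower I 2 ^ (j + 1))) {p : Ideal R} [p.IsPrime]
    (hp : p ∈ I.minimalPrimes) :
    IsReduction (J.map (algebraMap R (Localization.AtPrime p)))
      (I.map (algebraMap R (Localization.AtPrime p)) ^ (2 * j + 2)) := by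
  have := hJ.map (algebraMap R (Localization.AtPrime p))
  rwa [← h.symbolicPower_two_mul, map_symbolicPower hp] at this

theorem map_pow_le_of_isReduction (h : IsSelfLinked I Δ α)
    (hJ : IsReduction (span {f, g}) (symbolicPower I 2 ^ (j + 1))) {p : Ideal R} [p.IsPrime]
    (hp : p ∈ I.minimalPrimes) :
    I.map (algebraMap R (Localization.AtPrime p)) ^ (4 * j + 3) ≤
        (span {f, g}).map (algebraMap R (Localization.AtPrime p)) ∧
      ∃ m ∈ I.map (algebraMap R (Localization.AtPrime p)) ^ (4 * j + 2),
        I.map (algebraMap R (Localization.AtPrime p)) ^ (4 * j + 2) ≤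
          (span {f, g}).map (algebraMap R (Localization.AtPrime p)) ⊔ span {m} := by
  obtain ⟨y, -, hy⟩ := h.exists_isRegularPair
  obtain ⟨hreg, hI⟩ := hy p hp
  have hmax := map_atPrime_le_maximalIdeal hp.1.2 (mem_map_of_mem _ h.right_mem)
  have hred := h.map_atPrime_isReduction hJ hp
  rw [hI, map_span, Set.image_pair] at hred ⊢
  have := hreg.pow_le_of_isReduction_pair hmax (by omega) hred
  rwa [show 2 * (2 * j + 2) - 1 = 4 * j + 3 by omega,
    show 2 * (2 * j + 2) - 2 = 4 * j + 2 by omega] at this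

theorem isReduction_span_pow_mul_sub (h : IsSelfLinked I Δ α) {y : R} (hy : y ∈ I) (c : R)
    (j : ℕ) : IsReduction (span {Δ ^ j * (Δ - c * (α * y)), α ^ (2 * j + 2)})
      (symbolicPower I 2 ^ (j + 1)) := by
  have hαy : α * y ∈ symbolicPower I 2 :=
    pow_le_symbolicPower 2 (pow_two I ▸ mul_mem_mul h.right_mem hy)
  have hsq : (α * y) ^ 2 ∈ span {α ^ 2} * symbolicPower I 2 := by
    rw [mul_pow]
    exact mul_mem_mul (mem_span_singleton_self _) (pow_le_symbolicPower 2 (pow_mem_pow hy 2))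
  have := h.isReduction_span_pair.span_pair_pow_mul
    (h.isReduction_span_pair.span_pair_sub_of_sq_mem hαy hsq c) j
  rwa [Set.pair_comm, ← pow_mul] at this

theorem algebraMap_mem_map_pow_of_forall_mem (h : IsSelfLinked I Δ α) {p : Ideal R} [p.IsPrime]
    (hp : p ∈ I.minimalPrimes) {y : R}
    (hreg : IsRegularPair (algebraMap R (Localization.AtPrime p) α)
      (algebraMap R (Localization.AtPrime p) y))
    (hI : I.map (algebraMap R (Localization.AtPrime p)) =
      span {algebraMap R (Localization.AtPrime p) α, algebraMap R (Localization.AtPrime p) y})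
    {c : ℕ → R} (hc₀ : c 0 = 0) (hc : ∀ k l, k ≠ l → IsUnit (c k - c l))
    (hJ : ∀ l, IsReduction (span {Δ ^ j * (Δ - c l * (α * y)), α ^ (2 * j + 2)})
      (symbolicPower I 2 ^ (j + 1)))
    (hJ' : ∀ l, 1 ≤ l → IsReduction (span {Δ ^ (j + 1), α ^ (2 * j + 1) * (α - c l * y)})
      (symbolicPower I 2 ^ (j + 1))) {z : R}
    (hzJ : ∀ l < 2 * j + 2, z ∈ span {Δ ^ j * (Δ - c l * (α * y)), α ^ (2 * j + 2)})
    (hzJ' : ∀ l < 2 * j + 1, z ∈ span {Δ ^ (j + 1), α ^ (2 * j + 1) * (α - c (l + 1) * y)}) :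
    algebraMap R (Localization.AtPrime p) z ∈
      I.map (algebraMap R (Localization.AtPrime p)) ^ (4 * j + 3) := by
  rw [hI]
  refine hreg.mem_pow_of_forall_isReduction (Δ := algebraMap R (Localization.AtPrime p) Δ)
    (c := fun l => algebraMap R (Localization.AtPrime p) (c l)) (hI ▸ h.map_left_mem_sq hp)
    ?_ (fun k _ l _ hkl => ?_) (fun l _ => ?_) (fun l _ hl => ?_) (fun l hl => ?_)
    fun l hl hl₁ => ?_
  · rw [hc₀, map_zero]
  · rw [← map_sub]
    exact (hc k l hkl).map _
  · simpa only [hI, map_span, Set.image_pair, map_mul, map_sub, map_pow] using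
      h.map_atPrime_isReduction (hJ l) hp
  · simpa only [hI, map_span, Set.image_pair, map_mul, map_sub, map_pow] using
      h.map_atPrime_isReduction (hJ' l hl) hp
  · simpa only [map_span, Set.image_pair, map_mul, map_sub, map_pow] using
      mem_map_of_mem (algebraMap R (Localization.AtPrime p)) (hzJ l hl)
  · obtain ⟨l, rfl⟩ := Nat.exists_eq_add_of_le' hl₁
    simpa only [map_span, Set.image_pair, map_mul, map_sub, map_pow] using
      mem_map_of_mem (algebraMap R (Localization.AtPrime p)) (hzJ' l (by omega))

variable [Infinite (ResidueField R)]

theorem exists_eq_span_pair (h : IsSelfLinked I Δ α)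
    (hJ : IsMinimalReduction J (symbolicPower I 2 ^ (j + 1))) :
    ∃ f g, J = span {f, g} :=
  hJ.exists_eq_span_pair (h.isReduction_span_pair.span_pair_pow_mul h.isReduction_span_pair j)

theorem symbolicPower_le_of_isMinimalReduction (h : IsSelfLinked I Δ α)
    (hJ : IsMinimalReduction J (symbolicPower I 2 ^ (j + 1))) :
    symbolicPower I (4 * j + 3) ≤ J := by
  obtain ⟨f, g, rfl⟩ := h.exists_eq_span_pair hJ
  refine (h.isSaturatedAt_span_pair_of_isReduction hJ.1).le_of_forall_map_le fun p _ hp => ?_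
  rw [map_symbolicPower hp]
  exact (h.map_pow_le_of_isReduction hJ.1 hp).1

theorem le_of_iInf_le_symbolicPower (h : IsSelfLinked I Δ α) {t : ℕ} {J : Fin t → Ideal R}
    (hJ : ∀ i, IsMinimalReduction (J i) (symbolicPower I 2 ^ (j + 1)))
    (hinf : ⨅ i, J i ≤ symbolicPower I (4 * j + 3)) : 4 * j + 3 ≤ t := by
  obtain ⟨p, hp⟩ := nonempty_minimalPrimes (ne_top_of_le_ne_top IsPrime.ne_top' h.le_maximalIdeal)
  have := hp.1.1
  obtain ⟨y, -, hy⟩ := h.exists_isRegularPair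
  obtain ⟨hreg, hI⟩ := hy p hp
  choose f g hfg using fun i => h.exists_eq_span_pair (hJ i)
  obtain rfl : J = fun i => span {f i, g i} := funext hfg
  have hinf' := map_mono (f := algebraMap R (Localization.AtPrime p)) hinf
  rw [map_symbolicPower hp, map_atPrime_iInf] at hinf'
  choose hpow m hm hcyclic using fun i => h.map_pow_le_of_isReduction (hJ i).1 hp
  have hne := ne_top_of_le_ne_top IsPrime.ne_top' (map_atPrime_le_maximalIdeal hp.1.2)
  rw [hI] at hpow hm hcyclic hinf' hne
  exact hreg.lt_of_iInf_le_pow hne _ m hm hpow hcyclic hinf'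

theorem exists_seq_isReduction_span_pow_mul_sub (h : IsSelfLinked I Δ α) {y : R} (hy : y ∈ I)
    (j : ℕ) : ∃ c : ℕ → R, c 0 = 0 ∧ (∀ k l, k ≠ l → IsUnit (c k - c l)) ∧
      ∀ l, 1 ≤ l → IsReduction (span {Δ ^ (j + 1), α ^ (2 * j + 1) * (α - c l * y)})
        (symbolicPower I 2 ^ (j + 1)) := by
  have hαy : α * y ∈ symbolicPower I 2 :=
    pow_le_symbolicPower 2 (pow_two I ▸ mul_mem_mul h.right_mem hy)
  have hred : IsReduction (span {Δ, α ^ 2}) (symbolicPower I 2) :=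
    Set.pair_comm (α ^ 2) Δ ▸ h.isReduction_span_pair
  obtain ⟨c, hc₀, hc, hcred⟩ := hred.exists_seq_isReduction_span_pair_sub hαy
  refine ⟨c, hc₀, hc, fun l hl => ?_⟩
  convert hred.span_pair_pow_mul (hcred l hl) j using 4
  ring

theorem exists_isMinimalReduction_iInf_le (h : IsSelfLinked I Δ α) (j : ℕ) :
    ∃ J : Fin (2 * j + 2) ⊕ Fin (2 * j + 1) → Ideal R,
      (∀ i, IsMinimalReduction (J i) (symbolicPower I 2 ^ (j + 1))) ∧
      ⨅ i, J i ≤ symbolicPower I (4 * j + 3) := by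
  obtain ⟨y, hyI, hy⟩ := h.exists_isRegularPair
  obtain ⟨c, hc₀, hc, hJ'⟩ := h.exists_seq_isReduction_span_pow_mul_sub hyI j
  have hJ (l : ℕ) := h.isReduction_span_pow_mul_sub hyI (c l) j
  refine ⟨Sum.elim (fun l => span {Δ ^ j * (Δ - c l * (α * y)), α ^ (2 * j + 2)})
    (fun l => span {Δ ^ (j + 1), α ^ (2 * j + 1) * (α - c (l + 1) * y)}), ?_, ?_⟩
  · rintro (l | l)
    exacts [h.isMinimalReduction_span_pair (hJ l),
      h.isMinimalReduction_span_pair (hJ' (l + 1) l.val.succ_pos)]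
  refine (h.isSaturatedAt_self.symbolicPower _).le_of_forall_map_le fun p _ hp => ?_
  obtain ⟨hreg, hI⟩ := hy p hp
  rw [map_symbolicPower hp, map_le_iff_le_comap]
  intro z hz
  rw [iInf_sum, mem_inf, mem_iInf, mem_iInf] at hz
  exact h.algebraMap_mem_map_pow_of_forall_mem hp hreg hI hc₀ hc hJ hJ'
    (fun l hl => hz.1 ⟨l, hl⟩) fun l hl => hz.2 ⟨l, hl⟩

theorem core_and_gamma (h : IsSelfLinked I Δ α) (j : ℕ) :
    core (symbolicPower I 2 ^ (j + 1)) = symbolicPower I (4 * j + 3) ∧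
      gamma (symbolicPower I 2 ^ (j + 1)) = ((4 * j + 3 : ℕ) : ℕ∞) := by
  obtain ⟨J, hJ, hinf⟩ := h.exists_isMinimalReduction_iInf_le j
  have hcard : Fintype.card (Fin (2 * j + 2) ⊕ Fin (2 * j + 1)) = 4 * j + 3 := by
    rw [Fintype.card_sum, Fintype.card_fin, Fintype.card_fin]
    omega
  have := core_eq_and_gamma_eq (fun _ => h.symbolicPower_le_of_isMinimalReduction) hJ hinf
    fun _ _ hJ' hinf' => hcard.trans_le (h.le_of_iInf_le_symbolicPower hJ' hinf')
  rwa [hcard] at this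

end IsSelfLinked

end Core

theorem statement18_general {R : Type u} [CommRing R] [IsNoetherianRing R] [IsLocalRing R]
    (hCM : IsCMLocalRing R) (hres : Infinite (ResidueField R))
    (I : Ideal R) (hht : ht I = ((2 : ℕ) : WithBot ℕ∞))
    (hgci : ∀ p : Ideal R, ∀ hp : p ∈ I.minimalPrimes,
      letI : p.IsPrime := hp.1.1
      ∃ rs : List (Localization.AtPrime p),
        RingTheory.Sequence.IsRegular (Localization.AtPrime p) rs ∧
        Ideal.ofList rs = Ideal.map (algebraMap R (Localization.AtPrime p)) I)
    (Δ α : R) (hΔ : Δ ∈ symbolicPower I 2) (hα : α ∈ I)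
    (hlink : I = Submodule.colon (Ideal.span {Δ, α}) I)
    (j : ℕ) (hj : 1 ≤ j) :
    core (symbolicPower I (2 * j)) = symbolicPower I (4 * j - 1) ∧
      gamma (symbolicPower I (2 * j)) = ((4 * j - 1 : ℕ) : ℕ∞) := by
  obtain ⟨j, rfl⟩ := Nat.exists_eq_add_of_le' hj
  have h : IsSelfLinked I Δ α := ⟨hCM, hht, hgci, hΔ, hα, hlink⟩
  rw [h.symbolicPower_two_mul, show 4 * (j + 1) - 1 = 4 * j + 3 by omega]
  exact h.core_and_gamma j

/-- Corollary 4.4: for a self-linked perfect ideal of height two which is generically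
a complete intersection, `core(I^{(2j)}) = I^{(4j-1)}`, and if `R` is Gorenstein
then `γ(I^{(2j)}) = 4j - 1`. -/
theorem statement18 {R : Type u} [CommRing R] [IsNoetherianRing R] [IsLocalRing R]
    (hCM : IsCMLocalRing R) (hres : Infinite (ResidueField R))
    (I : Ideal R) (hperf : IsPerfectIdeal I) (hht : ht I = ((2 : ℕ) : WithBot ℕ∞))
    (hgci : ∀ p : Ideal R, ∀ hp : p ∈ I.minimalPrimes,
      letI : p.IsPrime := hp.1.1
      ∃ rs : List (Localization.AtPrime p),
        RingTheory.Sequence.IsRegular (Localization.AtPrime p) rs ∧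
        Ideal.ofList rs = Ideal.map (algebraMap R (Localization.AtPrime p)) I)
    (Δ α : R) (hΔ : Δ ∈ symbolicPower I 2) (hα : α ∈ I)
    (hlink : I = Submodule.colon (Ideal.span {Δ, α}) I)
    (j : ℕ) (hj : 1 ≤ j) :
    core (symbolicPower I (2 * j)) = symbolicPower I (4 * j - 1) ∧
    (IsGorensteinLocalRing R →
      gamma (symbolicPower I (2 * j)) = ((4 * j - 1 : ℕ) : ℕ∞)) := by
  obtain ⟨hcore, hgamma⟩ := statement18_general hCM hres I hht hgci Δ α hΔ hα hlink j hj
  exact ⟨hcore, fun _ => hgamma⟩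

end CPU
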